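/- There exists an absolute constant C such that for every prime p, all finite sets A, B ⊆ F_p and every finite set L of lines y = ax + b in F_p² with a ≠ 0, the number of incidences satisfies I(A×B, L) ≤ C·max{ |B|^(1/2)·|L|·(max{1, |A|²/p})^(1/2), |B|^(1/2)·|A|^(5/8)·E(L)^(1/8)·|L|^(1/2) }. -/

import Mathlib

/-- Composition in `Aff(F_p)` of lines `(a,b)`, acting as `x ↦ ax + b`:
`(a,b)∘(c,d) = (ac, ad + b)`. -/
def acomp (p : ℕ) (l m : ZMod p × ZMod p) : ZMod p × ZMod p :=
  (l.1 * m.1, l.1 * m.2 + l.2)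

/-- Inverse in `Aff(F_p)` of a line `(a,b)` with `a ≠ 0`. -/
def ainv (p : ℕ) (l : ZMod p × ZMod p) : ZMod p × ZMod p := (l.1⁻¹, -(l.1⁻¹ * l.2))

/-- The energy of a set of non-vertical lines regarded as elements of `Aff(F_p)`:
`E(L) = #{(l₁,l₂,l₁',l₂') ∈ L⁴ : l₁⁻¹∘l₂ = l₁'⁻¹∘l₂'}`. -/
noncomputable def affEnergy (p : ℕ) (L : Finset (ZMod p × ZMod p)) : ℕ :=
  Set.ncard {q : (ZMod p × ZMod p) × (ZMod p × ZMod p) × (ZMod p × ZMod p) ×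
      (ZMod p × ZMod p) |
    q.1 ∈ L ∧ q.2.1 ∈ L ∧ q.2.2.1 ∈ L ∧ q.2.2.2 ∈ L ∧
    acomp p (ainv p q.1) q.2.1 = acomp p (ainv p q.2.2.1) q.2.2.2}

/-- The number of incidences between the grid `A×B` and the set of lines `L`. -/
noncomputable def inc (p : ℕ) (A B : Finset (ZMod p)) (L : Finset (ZMod p × ZMod p)) : ℕ :=
  Set.ncard {ql : (ZMod p × ZMod p) × ZMod p × ZMod p |
    ql.1.1 ∈ A ∧ ql.1.2 ∈ B ∧ ql.2 ∈ L ∧ ql.1.2 = ql.2.1 * ql.1.1 + ql.2.2}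



namespace EI

open MvPolynomial

section geom

variable {K : Type*} [Field K]

/-- restriction of a polynomial in `(x,z,y)` to the red line `z = w, x = u y - v`. -/
noncomputable def evR (r : K × K × K) : MvPolynomial (Fin 3) K →ₐ[K] Polynomial K :=
  aeval ![Polynomial.C r.1 * Polynomial.X - Polynomial.C r.2.1, Polynomial.C r.2.2, Polynomial.X]

/-- restriction of a polynomial in `(x,z,y)` to the blue line `y = β, x = g z + h`. -/
noncomputable def evB (b : K × K × K) : MvPolynomial (Fin 3) K →ₐ[K] Polynomial K :=
  aeval ![Polynomial.C b.2.1 * Polynomial.X + Polynomial.C b.2.2, Polynomial.X, Polynomial.C b.1]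

/-- incidence of a red line `(u,v,w)` and a blue line `(β,g,h)` -/
def Inc (r b : K × K × K) : Prop := r.1 * b.1 - r.2.1 = b.2.1 * r.2.2 + b.2.2

lemma evR_natDegree (r : K × K × K) (P : MvPolynomial (Fin 3) K) :
    (evR r P).natDegree ≤ P.totalDegree := by
  have := aeval_natDegree_le (m := P.totalDegree) (n := 1) P le_rfl
    ![Polynomial.C r.1 * Polynomial.X - Polynomial.C r.2.1, Polynomial.C r.2.2, Polynomial.X] (by
      intro i
      fin_cases i
      · simp only [Fin.zero_eta, Matrix.cons_val_zero]
        refine (Polynomial.natDegree_sub_le _ _).trans ?_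
        simpa using (Polynomial.natDegree_C_mul_le r.1 Polynomial.X).trans Polynomial.natDegree_X_le
      · simp
      · simp)
  simpa [evR] using this

lemma evB_natDegree (r : K × K × K) (P : MvPolynomial (Fin 3) K) :
    (evB r P).natDegree ≤ P.totalDegree := by
  have := aeval_natDegree_le (m := P.totalDegree) (n := 1) P le_rfl
    ![Polynomial.C r.2.1 * Polynomial.X + Polynomial.C r.2.2, Polynomial.X, Polynomial.C r.1] (by
      intro i
      fin_cases i
      · simp only [Fin.zero_eta, Matrix.cons_val_zero]
        refine (Polynomial.natDegree_add_le _ _).trans ?_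
        simpa using (Polynomial.natDegree_C_mul_le r.2.1 Polynomial.X).trans Polynomial.natDegree_X_le
      · simp
      · simp)
  simpa [evB] using this

lemma evR_eval (r : K × K × K) (t : K) (P : MvPolynomial (Fin 3) K) :
    (evR r P).eval t = MvPolynomial.eval ![r.1 * t - r.2.1, r.2.2, t] P := by
  have : (Polynomial.aeval t).comp (evR r) = MvPolynomial.aeval ![r.1 * t - r.2.1, r.2.2, t] := by
    apply MvPolynomial.algHom_ext
    intro i
    fin_cases i <;> simp [evR]
  have h2 := congrArg (fun f => f P) this
  simpa [Polynomial.aeval_def, MvPolynomial.aeval_eq_eval] using h2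

lemma evB_eval (r : K × K × K) (t : K) (P : MvPolynomial (Fin 3) K) :
    (evB r P).eval t = MvPolynomial.eval ![r.2.1 * t + r.2.2, t, r.1] P := by
  have : (Polynomial.aeval t).comp (evB r) = MvPolynomial.aeval ![r.2.1 * t + r.2.2, t, r.1] := by
    apply MvPolynomial.algHom_ext
    intro i
    fin_cases i <;> simp [evB]
  have h2 := congrArg (fun f => f P) this
  simpa [Polynomial.aeval_def, MvPolynomial.aeval_eq_eval] using h2

lemma ev_inc {r b : K × K × K} (h : Inc r b) (P : MvPolynomial (Fin 3) K) :
    (evR r P).eval b.1 = (evB b P).eval r.2.2 := by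
  rw [evR_eval, evB_eval]
  unfold Inc at h
  rw [h]

lemma count2 (c : MvPolynomial (Fin 2) K) (hc : c ≠ 0) (W : Finset K)
    (hW : ∀ w ∈ W, aeval ![Polynomial.C w, (Polynomial.X : Polynomial K)] c = 0) :
    W.card ≤ c.totalDegree := by
  classical
  set q := finSuccEquiv K 1 c with hq
  have hq0 : q ≠ 0 := by simpa [hq] using hc
  have hdeg : q.natDegree ≤ c.totalDegree := by
    rw [hq, natDegree_finSuccEquiv]; exact degreeOf_le_totalDegree _ _
  have hroot : ∀ w ∈ W, (MvPolynomial.C w : MvPolynomial (Fin 1) K) ∈ q.roots := by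
    intro w hw
    rw [Polynomial.mem_roots hq0, Polynomial.IsRoot.def]
    have h1 := hW w hw
    -- the map MvPolynomial (Fin 1) K → K[X] is injective
    let ψ : MvPolynomial (Fin 1) K →ₐ[K] Polynomial K := aeval ![(Polynomial.X : Polynomial K)]
    have hψ : Function.Injective ψ := by
      let φ : Polynomial K →ₐ[K] MvPolynomial (Fin 1) K := Polynomial.aeval (X 0)
      have : φ.comp ψ = AlgHom.id K _ := by
        apply MvPolynomial.algHom_ext
        intro i
        fin_cases i
        simp [φ, ψ]
      intro a b hab
      have h2 := congrArg φ hab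
      have h3 : ∀ a, φ (ψ a) = a := fun a => congrArg (fun f => f a) this
      rwa [h3, h3] at h2
    apply hψ
    rw [map_zero, ← h1]
    have : (ψ.toRingHom.comp (Polynomial.evalRingHom (MvPolynomial.C w))).comp
        (finSuccEquiv K 1).toAlgHom.toRingHom
        = (aeval ![Polynomial.C w, (Polynomial.X : Polynomial K)] :
          MvPolynomial (Fin 2) K →ₐ[K] Polynomial K).toRingHom := by
      apply MvPolynomial.ringHom_ext
      · intro a
        simp [ψ, finSuccEquiv_apply]
      intro i
      fin_cases i
      · have : (finSuccEquiv K 1) (X 0) = Polynomial.X := finSuccEquiv_X_zero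
        simp [ψ, this]
      · have : (finSuccEquiv K 1) (X 1) = Polynomial.C (X 0) := finSuccEquiv_X_succ (j := 0)
        simp [ψ, this]
    exact congrArg (fun f => f c) this
  have hsub : W.image (fun w => (MvPolynomial.C w : MvPolynomial (Fin 1) K)) ⊆ q.roots.toFinset := by
    intro x hx
    obtain ⟨w, hw, rfl⟩ := Finset.mem_image.1 hx
    exact Multiset.mem_toFinset.2 (hroot w hw)
  have h1 := Finset.card_le_card hsub
  rw [Finset.card_image_of_injective _ (MvPolynomial.C_injective _ _)] at h1
  exact (h1.trans (Multiset.toFinset_card_le _)).trans ((Polynomial.card_roots' q).trans hdeg)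

lemma totalDegree_det_le {n : Type*} [Fintype n] [DecidableEq n] {σ : Type*}
    (M : Matrix n n (MvPolynomial σ K)) (d : n → ℕ) (h : ∀ i j, (M i j).totalDegree ≤ d j) :
    M.det.totalDegree ≤ ∑ j, d j := by
  rw [Matrix.det_apply]
  refine totalDegree_finsetSum_le ?_
  intro σ _
  refine (totalDegree_smul_le _ _).trans ?_
  exact (totalDegree_finsetProd _ _).trans (Finset.sum_le_sum fun i _ => h _ _)

lemma totalDegree_coeff_fse (P : MvPolynomial (Fin 3) K) (i : ℕ) :
    ((finSuccEquiv K 2 P).coeff i).totalDegree ≤ P.totalDegree := by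
  by_cases h : (finSuccEquiv K 2 P).coeff i = 0
  · simp [h]
  · exact (Nat.le_add_right _ _).trans (totalDegree_coeff_finSuccEquiv_add_le P i h)

lemma natDegree_fse (P : MvPolynomial (Fin 3) K) :
    (finSuccEquiv K 2 P).natDegree ≤ P.totalDegree := by
  rw [natDegree_finSuccEquiv]; exact degreeOf_le_totalDegree _ _

lemma totalDegree_resultant (P F : MvPolynomial (Fin 3) K) :
    ((finSuccEquiv K 2 P).resultant (finSuccEquiv K 2 F)).totalDegree
      ≤ 2 * P.totalDegree * F.totalDegree := by
  set f := finSuccEquiv K 2 P with hf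
  set g := finSuccEquiv K 2 F with hg
  unfold Polynomial.resultant
  refine (totalDegree_det_le _ (Fin.addCases (fun _ => F.totalDegree) (fun _ => P.totalDegree)) ?_).trans ?_
  · intro i j
    refine Fin.addCases (fun j => ?_) (fun j => ?_) j
    · simp only [Polynomial.sylvester, Matrix.of_apply, Fin.addCases_left]
      split_ifs
      · exact totalDegree_coeff_fse _ _
      · simp
    · simp only [Polynomial.sylvester, Matrix.of_apply, Fin.addCases_right]
      split_ifs
      · exact totalDegree_coeff_fse _ _
      · simp
  · rw [Fin.sum_univ_add]
    simp only [Fin.addCases_left, Fin.addCases_right, Finset.sum_const, Finset.card_univ,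
      Fintype.card_fin, smul_eq_mul]
    have h1 : f.natDegree ≤ P.totalDegree := natDegree_fse P
    have h2 : g.natDegree ≤ F.totalDegree := natDegree_fse F
    nlinarith [Nat.mul_le_mul_right F.totalDegree h1, Nat.mul_le_mul_right P.totalDegree h2]

/-- specialization of the outer variable -/
lemma evR_fse (r : K × K × K) (P : MvPolynomial (Fin 3) K) :
    evR r P = Polynomial.eval₂
      (aeval ![Polynomial.C r.2.2, (Polynomial.X : Polynomial K)] :
        MvPolynomial (Fin 2) K →ₐ[K] Polynomial K).toRingHom
      (Polynomial.C r.1 * Polynomial.X - Polynomial.C r.2.1) (finSuccEquiv K 2 P) := by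
  have : (evR r).toRingHom = (Polynomial.eval₂RingHom
      (aeval ![Polynomial.C r.2.2, (Polynomial.X : Polynomial K)] :
        MvPolynomial (Fin 2) K →ₐ[K] Polynomial K).toRingHom
      (Polynomial.C r.1 * Polynomial.X - Polynomial.C r.2.1)).comp
        (finSuccEquiv K 2).toAlgHom.toRingHom := by
    apply MvPolynomial.ringHom_ext
    · intro a
      simp [evR, finSuccEquiv_apply]
    · intro i
      fin_cases i
      · have : (finSuccEquiv K 2) (X 0) = Polynomial.X := finSuccEquiv_X_zero
        simp [evR, this]
      · have : (finSuccEquiv K 2) (X 1) = Polynomial.C (X 0) := finSuccEquiv_X_succ (j := 0)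
        simp [evR, this]
      · have : (finSuccEquiv K 2) (X 2) = Polynomial.C (X 1) := finSuccEquiv_X_succ (j := 1)
        simp [evR, this]
  exact congrArg (fun f => f P) this

lemma bezout (P F : MvPolynomial (Fin 3) K) (hP : Irreducible P) (hF : ¬ P ∣ F)
    (W : Finset (K × K × K)) (hinj : Set.InjOn (fun r : K × K × K => r.2.2) W)
    (hWP : ∀ r ∈ W, evR r P = 0) (hWF : ∀ r ∈ W, evR r F = 0) :
    W.card ≤ 2 * P.totalDegree * F.totalDegree + P.totalDegree := by
  classical
  set f := finSuccEquiv K 2 P with hf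
  set g := finSuccEquiv K 2 F with hg
  have hfi : Irreducible f := (MulEquiv.irreducible_iff (finSuccEquiv K 2)).2 hP
  have hcard : (W.image (fun r => r.2.2)).card = W.card := Finset.card_image_of_injOn hinj
  by_cases hdeg : f.natDegree = 0
  · obtain ⟨c, hc⟩ := Polynomial.natDegree_eq_zero.1 hdeg
    have hc0 : c ≠ 0 := by
      rintro rfl
      apply hfi.ne_zero; rw [← hc]; simp
    have := count2 c hc0 (W.image (fun r => r.2.2)) (by
      intro w hw
      obtain ⟨r, hr, rfl⟩ := Finset.mem_image.1 hw
      have h1 := hWP r hr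
      rw [evR_fse, ← hf, ← hc, Polynomial.eval₂_C] at h1
      exact h1)
    rw [hcard] at this
    have h2 : c.totalDegree ≤ P.totalDegree := by
      have := totalDegree_coeff_fse P 0
      rw [← hf, ← hc] at this
      simpa using this
    omega
  · have hprim : f.IsPrimitive := hfi.isPrimitive hdeg
    set L := FractionRing (MvPolynomial (Fin 2) K)
    have hfi' := (hprim.irreducible_iff_irreducible_map_fraction_map (K := L)).1 hfi
    have hndvd : ¬ f ∣ g := by
      intro h
      exact hF ((map_dvd_iff (finSuccEquiv K 2)).1 h)
    have hndvd' : ¬ (f.map (algebraMap _ L)) ∣ (g.map (algebraMap _ L)) := fun h =>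
      hndvd (hprim.dvd_of_fraction_map_dvd_fraction_map h)
    have hcop : IsCoprime (f.map (algebraMap _ L)) (g.map (algebraMap _ L)) :=
      (hfi'.coprime_iff_not_dvd).2 hndvd'
    have hres : f.resultant g ≠ 0 := by
      intro h0
      have h1 := Polynomial.resultant_map_map f g f.natDegree g.natDegree (algebraMap _ L)
      rw [h0, map_zero] at h1
      have h3 := (Polynomial.natDegree_map_eq_of_injective (IsFractionRing.injective (MvPolynomial (Fin 2) K) L) f)
      have h4 := (Polynomial.natDegree_map_eq_of_injective (IsFractionRing.injective (MvPolynomial (Fin 2) K) L) g)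
      rw [← h3, ← h4] at h1
      exact (Polynomial.resultant_eq_zero_iff.1 h1).2 hcop
    obtain ⟨a, b, -, -, hab⟩ := Polynomial.exists_mul_add_mul_eq_C_resultant f g le_rfl le_rfl (Or.inl hdeg)
    have := count2 _ hres (W.image (fun r => r.2.2)) (by
      intro w hw
      obtain ⟨r, hr, rfl⟩ := Finset.mem_image.1 hw
      have h1 := hWP r hr
      have h2 := hWF r hr
      rw [evR_fse, ← hf] at h1
      rw [evR_fse, ← hg] at h2
      have h3 := congrArg (Polynomial.eval₂
        (aeval ![Polynomial.C r.2.2, (Polynomial.X : Polynomial K)] :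
        MvPolynomial (Fin 2) K →ₐ[K] Polynomial K).toRingHom
        (Polynomial.C r.1 * Polynomial.X - Polynomial.C r.2.1)) hab
      rw [Polynomial.eval₂_add, Polynomial.eval₂_mul, Polynomial.eval₂_mul, h1, h2,
        Polynomial.eval₂_C] at h3
      simpa using h3.symm)
    rw [hcard] at this
    have h2 := totalDegree_resultant P F
    rw [← hf, ← hg] at h2
    omega

end geom

end EI


namespace EI

open MvPolynomial

section ruled

variable {K : Type*} [Field K]

/-- the derivation along the level curves `z = const` of `P` -/
noncomputable def tD (P : MvPolynomial (Fin 3) K) :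
    Derivation K (MvPolynomial (Fin 3) K) (MvPolynomial (Fin 3) K) :=
  (pderiv 0 P) • pderiv 2 - (pderiv 2 P) • pderiv 0

lemma tD_apply (P f : MvPolynomial (Fin 3) K) :
    tD P f = pderiv 0 P * pderiv 2 f - pderiv 2 P * pderiv 0 f := by
  simp [tD]

/-- the curvature polynomial -/
noncomputable def curv (P : MvPolynomial (Fin 3) K) : MvPolynomial (Fin 3) K :=
  pderiv 0 P * tD P (pderiv 2 P) - pderiv 2 P * tD P (pderiv 0 P)

noncomputable def Dc (P : MvPolynomial (Fin 3) K) :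
    Derivation K (Polynomial (MvPolynomial (Fin 3) K)) (Polynomial (MvPolynomial (Fin 3) K)) :=
  PolynomialModule.equivPolynomialSelf.compDer (tD P).mapCoeffs

lemma Dc_coeff (P : MvPolynomial (Fin 3) K) (q : Polynomial (MvPolynomial (Fin 3) K)) (n : ℕ) :
    (Dc P q).coeff n = tD P (q.coeff n) := rfl

lemma Dc_C (P f : MvPolynomial (Fin 3) K) : Dc P (Polynomial.C f) = Polynomial.C (tD P f) := by
  ext1 n
  rw [Dc_coeff, Polynomial.coeff_C, Polynomial.coeff_C]
  split_ifs <;> simp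

lemma Dc_X (P : MvPolynomial (Fin 3) K) : Dc P Polynomial.X = 0 := by
  ext1 n
  rw [Dc_coeff, Polynomial.coeff_X, Polynomial.coeff_zero]
  split_ifs <;> simp

/-- the tangent-line substitution -/
noncomputable def Phi (P : MvPolynomial (Fin 3) K) :
    MvPolynomial (Fin 3) K →ₐ[K] Polynomial (MvPolynomial (Fin 3) K) :=
  aeval ![Polynomial.C (X 0) - Polynomial.X * Polynomial.C (pderiv 2 P), Polynomial.C (X 1),
    Polynomial.C (X 2) + Polynomial.X * Polynomial.C (pderiv 0 P)]

lemma Phi_identity (P f : MvPolynomial (Fin 3) K) :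
    Polynomial.C (pderiv 0 P) * Dc P (Phi P f) =
      (Polynomial.C (pderiv 0 P) + Polynomial.X * Polynomial.C (tD P (pderiv 0 P))) *
        Polynomial.derivative (Phi P f)
      - Polynomial.X * Polynomial.C (curv P) * Phi P (pderiv 0 f) := by
  induction f using MvPolynomial.induction_on with
  | C a =>
    have : Phi P (C a) = Polynomial.C (C a) := by
      simp only [Phi, aeval_C]; rfl
    rw [this, Dc_C]
    simp [tD_apply]
  | add p q hp hq =>
    simp only [map_add, mul_add, hp, hq]; ring
  | mul_X p i hp =>
    have key : Polynomial.C (pderiv 0 P) * Dc P (Phi P (X i)) =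
      (Polynomial.C (pderiv 0 P) + Polynomial.X * Polynomial.C (tD P (pderiv 0 P))) *
        Polynomial.derivative (Phi P (X i))
      - Polynomial.X * Polynomial.C (curv P) * Phi P (pderiv 0 (X i)) := by
      fin_cases i
      · simp [Phi, Dc_C, Dc_X, tD_apply, curv, pderiv_X]
        ring
      · simp [Phi, Dc_C, Dc_X, tD_apply, pderiv_X]
      · simp [Phi, Dc_C, Dc_X, tD_apply, pderiv_X]
        ring
    simp only [map_mul, Derivation.leibniz, smul_eq_mul, Polynomial.derivative_mul, map_add,
      mul_add] at hp key ⊢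
    linear_combination (Phi P (X i)) * hp + (Phi P p) * key

lemma Phi_natDegree (P f : MvPolynomial (Fin 3) K) : (Phi P f).natDegree ≤ f.totalDegree := by
  have h : Phi P f = aeval ![Polynomial.C (X 0) - Polynomial.X * Polynomial.C (pderiv 2 P),
    Polynomial.C (X 1), Polynomial.C (X 2) + Polynomial.X * Polynomial.C (pderiv 0 P)]
      (MvPolynomial.map (algebraMap K (MvPolynomial (Fin 3) K)) f) := by
    rw [MvPolynomial.aeval_map_algebraMap]; rfl
  rw [h]
  have hX : ∀ a : MvPolynomial (Fin 3) K,
      (Polynomial.X * Polynomial.C a).natDegree ≤ 1 := by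
    intro a
    refine Polynomial.natDegree_mul_le.trans ?_
    simp
  have := aeval_natDegree_le (m := f.totalDegree) (n := 1)
    (MvPolynomial.map (algebraMap K (MvPolynomial (Fin 3) K)) f)
    (by
      rw [MvPolynomial.totalDegree, MvPolynomial.totalDegree]
      exact Finset.sup_mono (MvPolynomial.support_map_subset _ _))
    ![Polynomial.C (X 0) - Polynomial.X * Polynomial.C (pderiv 2 P),
    Polynomial.C (X 1), Polynomial.C (X 2) + Polynomial.X * Polynomial.C (pderiv 0 P)] (by
      intro i
      fin_cases i
      · simp only [Fin.zero_eta, Matrix.cons_val_zero]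
        refine (Polynomial.natDegree_sub_le _ _).trans ?_
        simpa using hX _
      · simp
      · simp only [Fin.reduceFinMk, Matrix.cons_val]
        refine (Polynomial.natDegree_add_le _ _).trans ?_
        simpa using hX _)
  simpa using this

lemma Phi_dvd (p : ℕ) [CharP K p] [Fact p.Prime] (P : MvPolynomial (Fin 3) K) (hP : Irreducible P)
    (hdeg : P.totalDegree < p) (hx : ¬ P ∣ pderiv 0 P) (hG : P ∣ curv P) (n : ℕ) :
    P ∣ (Phi P P).coeff n := by
  have hprime : Prime P := hP.prime
  induction n with
  | zero =>
    have : (Phi P P).coeff 0 = P := by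
      have h2 : ((Polynomial.aeval (0 : MvPolynomial (Fin 3) K)).restrictScalars K).comp (Phi P)
          = AlgHom.id K _ := by
        apply MvPolynomial.algHom_ext
        intro i
        fin_cases i <;> simp [Phi]
      have h3 := congrArg (fun f => f P) h2
      rw [Polynomial.coeff_zero_eq_aeval_zero]
      exact h3
    rw [this]
  | succ n ih =>
    by_cases hn : P.totalDegree < n + 1
    · rw [Polynomial.coeff_eq_zero_of_natDegree_lt ((Phi_natDegree P P).trans_lt hn)]
      exact dvd_zero _
    · have hn' : n + 1 < p := by omega
      have h := congrArg (fun q => q.coeff n) (Phi_identity P P)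
      simp only [Polynomial.coeff_sub, Polynomial.coeff_C_mul, Dc_coeff, add_mul,
        Polynomial.coeff_add, Polynomial.coeff_derivative, mul_assoc] at h
      obtain ⟨c, hc⟩ := ih
      have h1 : P ∣ tD P ((Phi P P).coeff n) := by
        rw [hc, Derivation.leibniz]
        have : tD P P = 0 := by rw [tD_apply]; ring
        rw [this]
        simp
      have h2 : P ∣ (Polynomial.X * (Polynomial.C (tD P (pderiv 0 P)) *
          Polynomial.derivative (Phi P P))).coeff n := by
        cases n with
        | zero => simp
        | succ m =>
          rw [Polynomial.coeff_X_mul, Polynomial.coeff_C_mul, Polynomial.coeff_derivative, hc]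
          exact Dvd.dvd.mul_left (Dvd.dvd.mul_right (Dvd.intro _ rfl) _) _
      have h3 : P ∣ (Polynomial.X * (Polynomial.C (curv P) * (Phi P (pderiv 0 P)))).coeff n := by
        cases n with
        | zero => simp
        | succ m =>
          rw [Polynomial.coeff_X_mul, Polynomial.coeff_C_mul]
          exact hG.mul_right _
      have h4 : P ∣ pderiv 0 P * ((Phi P P).coeff (n + 1) * ((n : MvPolynomial (Fin 3) K) + 1)) := by
        have : pderiv 0 P * ((Phi P P).coeff (n + 1) * ((n : MvPolynomial (Fin 3) K) + 1)) =
          pderiv 0 P * tD P ((Phi P P).coeff n) - (Polynomial.X * (Polynomial.C (tD P (pderiv 0 P)) *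
          Polynomial.derivative (Phi P P))).coeff n +
          (Polynomial.X * (Polynomial.C (curv P) * (Phi P (pderiv 0 P)))).coeff n := by
          rw [h]; ring
        rw [this]
        exact dvd_add (dvd_sub (h1.mul_left _) h2) h3
      rcases hprime.dvd_or_dvd h4 with h5 | h5
      · exact absurd h5 hx
      · rcases hprime.dvd_or_dvd h5 with h6 | h6
        · exact h6
        · exfalso
          have h7 : ((n : MvPolynomial (Fin 3) K) + 1) = C ((n + 1 : ℕ) : K) := by simp
          have h8 : ((n + 1 : ℕ) : K) ≠ 0 := by
            intro h0
            rw [CharP.cast_eq_zero_iff K p] at h0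
            exact absurd (Nat.le_of_dvd (by omega) h0) (by omega)
          rw [h7] at h6
          exact hP.not_isUnit (isUnit_of_dvd_unit h6 ((isUnit_iff_ne_zero.2 h8).map C))

/-- direction slope of the tangent red line at the point of `b` with parameter `z0` -/
noncomputable def tangR (P : MvPolynomial (Fin 3) K) (b : K × K × K) (z0 : K) : K × K × K :=
  let u := -((evB b (pderiv 2 P)).eval z0) / ((evB b (pderiv 0 P)).eval z0)
  (u, u * b.1 - b.2.1 * z0 - b.2.2, z0)

lemma tangR_P (P : MvPolynomial (Fin 3) K) (hPhi : ∀ n, P ∣ (Phi P P).coeff n)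
    (b : K × K × K) (hb : evB b P = 0) (z0 : K) (hz : (evB b (pderiv 0 P)).eval z0 ≠ 0) :
    evR (tangR P b z0) P = 0 := by
  set Q0 : Fin 3 → K := ![b.2.1 * z0 + b.2.2, z0, b.1] with hQ0
  set px := (evB b (pderiv 0 P)).eval z0 with hpx
  set py := (evB b (pderiv 2 P)).eval z0 with hpy
  have hpx' : MvPolynomial.eval Q0 (pderiv 0 P) = px := by rw [hpx, evB_eval]
  have hpy' : MvPolynomial.eval Q0 (pderiv 2 P) = py := by rw [hpy, evB_eval]
  have hP0 : MvPolynomial.eval Q0 P = 0 := by rw [← evB_eval, hb]; simp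
  have heq : (evR (tangR P b z0)).toRingHom = (Polynomial.eval₂RingHom
      (Polynomial.C.comp (MvPolynomial.eval Q0))
      ((Polynomial.X - Polynomial.C b.1) * Polynomial.C px⁻¹)).comp (Phi P).toRingHom := by
    apply MvPolynomial.ringHom_ext
    · intro a
      have : Phi P (C a) = Polynomial.C (C a) := by
        simp only [Phi, aeval_C]; rfl
      simp [evR, this]
    · intro i
      have hcc : Polynomial.C px * Polynomial.C px⁻¹ = (1 : Polynomial K) := by
        rw [← Polynomial.C_mul, mul_inv_cancel₀ hz, Polynomial.C_1]
      have q0 : Q0 0 = b.2.1 * z0 + b.2.2 := by simp [hQ0]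
      have q1 : Q0 1 = z0 := by simp [hQ0]
      have q2 : Q0 2 = b.1 := by simp [hQ0]
      clear_value Q0
      fin_cases i
      · simp [evR, tangR, Phi, ← hpx, ← hpy, hpy', q0, div_eq_mul_inv]
        ring
      · simp [evR, tangR, Phi, q1]
      · simp [evR, tangR, Phi, hpx', q2]
        linear_combination (- (Polynomial.X - Polynomial.C b.1)) * hcc
  have h2 := congrArg (fun f => f P) heq
  refine h2.trans ?_
  change Polynomial.eval₂ _ _ (Phi P P) = 0
  rw [Polynomial.eval₂_eq_sum, Polynomial.sum]
  apply Finset.sum_eq_zero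
  intro n _
  obtain ⟨c, hc⟩ := hPhi n
  rw [hc]
  simp [hP0]

/-- the ruled surface through the blue line `b` -/
noncomputable def HB (P : MvPolynomial (Fin 3) K) (b : K × K × K) : MvPolynomial (Fin 3) K :=
  (X 0 - C b.2.1 * X 1 - C b.2.2) * Polynomial.aeval (X 1) (evB b (pderiv 0 P))
    + (X 2 - C b.1) * Polynomial.aeval (X 1) (evB b (pderiv 2 P))

lemma tangR_HB (P : MvPolynomial (Fin 3) K)
    (b : K × K × K) (z0 : K) (hz : (evB b (pderiv 0 P)).eval z0 ≠ 0) :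
    evR (tangR P b z0) (HB P b) = 0 := by
  have key : ∀ q : Polynomial K, evR (tangR P b z0) (Polynomial.aeval (X 1) q)
      = Polynomial.C (q.eval z0) := by
    intro q
    have : (evR (tangR P b z0)) (X 1) = Polynomial.C z0 := by simp [evR, tangR]
    rw [← Polynomial.aeval_algHom_apply, this]
    rw [show (Polynomial.C z0 : Polynomial K) = algebraMap K (Polynomial K) z0 from rfl,
      Polynomial.aeval_algebraMap_apply]
    simp
  simp only [HB, map_add, map_mul, key, map_sub]
  set px := (evB b (pderiv 0 P)).eval z0 with hpx
  set py := (evB b (pderiv 2 P)).eval z0 with hpy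
  have hcc : Polynomial.C px * Polynomial.C px⁻¹ = (1 : Polynomial K) := by
    rw [← Polynomial.C_mul, mul_inv_cancel₀ hz, Polynomial.C_1]
  have hC : ∀ a : K, evR (tangR P b z0) (C a) = Polynomial.C a := by
    intro a; simp [evR]
  simp only [hC]
  simp [evR, tangR, ← hpx, ← hpy, div_eq_mul_inv]
  linear_combination (- Polynomial.C py * (Polynomial.X - Polynomial.C b.1)) * hcc

lemma dvd_HB [Infinite K] (P : MvPolynomial (Fin 3) K) (hP : Irreducible P)
    (hPhi : ∀ n, P ∣ (Phi P P).coeff n)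
    (b : K × K × K) (hb : evB b P = 0) (hbx : evB b (pderiv 0 P) ≠ 0) : P ∣ HB P b := by
  classical
  by_contra hnd
  have hinf : {z : K | (evB b (pderiv 0 P)).eval z ≠ 0}.Infinite := by
    have hfin : {z : K | (evB b (pderiv 0 P)).eval z = 0}.Finite := by
      refine (evB b (pderiv 0 P)).roots.toFinset.finite_toSet.subset ?_
      intro z hz
      simp only [Finset.mem_coe, Multiset.mem_toFinset]
      exact (Polynomial.mem_roots hbx).2 hz
    exact hfin.infinite_compl
  obtain ⟨Z, hZ, hcard⟩ := hinf.exists_subset_card_eq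
    (2 * P.totalDegree * (HB P b).totalDegree + P.totalDegree + 1)
  have hinj : Function.Injective (tangR P b) := by
    intro z z' h
    exact congrArg (fun r : K × K × K => r.2.2) h
  have := bezout P (HB P b) hP hnd (Z.image (tangR P b)) (by
      intro r hr r' hr' h
      simp only [Finset.coe_image, Set.mem_image, Finset.mem_coe] at hr hr'
      obtain ⟨z, _, rfl⟩ := hr
      obtain ⟨z', _, rfl⟩ := hr'
      have : z = z' := h
      rw [this])
    (by
      intro r hr
      obtain ⟨z, hz, rfl⟩ := Finset.mem_image.1 hr
      exact tangR_P P hPhi b hb z (hZ hz))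
    (by
      intro r hr
      obtain ⟨z, hz, rfl⟩ := Finset.mem_image.1 hr
      exact tangR_HB P b z (hZ hz))
  rw [Finset.card_image_of_injective _ hinj] at this
  omega

lemma HB_eq {P : MvPolynomial (Fin 3) K} {b b1 : K × K × K} (h : P ∣ HB P b)
    (hb1 : evB b1 P = 0) :
    (Polynomial.C (b1.2.1 - b.2.1) * Polynomial.X + Polynomial.C (b1.2.2 - b.2.2)) *
      evB b (pderiv 0 P) + Polynomial.C (b1.1 - b.1) * evB b (pderiv 2 P) = 0 := by
  have h0 : evB b1 (HB P b) = 0 := by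
    obtain ⟨c, hc⟩ := h
    rw [hc, map_mul, hb1, zero_mul]
  have key : ∀ q : Polynomial K, evB b1 (Polynomial.aeval (X 1) q) = q := by
    intro q
    have : (evB b1) (X 1) = Polynomial.X := by simp [evB]
    rw [← Polynomial.aeval_algHom_apply, this]
    simp
  have hC : ∀ a : K, evB b1 (C a) = Polynomial.C a := by
    intro a; simp [evB]
  simp only [HB, map_add, map_mul, key, map_sub, hC] at h0
  have e0 : evB b1 (X 0) = Polynomial.C b1.2.1 * Polynomial.X + Polynomial.C b1.2.2 := by
    simp [evB]
  have e1 : evB b1 (X 1) = Polynomial.X := by simp [evB]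
  have e2 : evB b1 (X 2) = Polynomial.C b1.1 := by simp [evB]
  rw [e0, e1, e2] at h0
  simp only [Polynomial.C_sub]
  linear_combination h0

lemma ruled_conclusion (p : ℕ) [CharP K p] [Fact p.Prime] [Infinite K]
    (P : MvPolynomial (Fin 3) K) (hP : Irreducible P)
    (hdeg : P.totalDegree < p) (hx : ¬ P ∣ pderiv 0 P) (hG : P ∣ curv P)
    (b b1 b2 : K × K × K) (hb : evB b P = 0) (hb1 : evB b1 P = 0) (hb2 : evB b2 P = 0)
    (hbx : evB b (pderiv 0 P) ≠ 0) :
    (b1.1 - b.1) * (b2.2.1 - b.2.1) = (b2.1 - b.1) * (b1.2.1 - b.2.1) ∧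
    (b1.1 - b.1) * (b2.2.2 - b.2.2) = (b2.1 - b.1) * (b1.2.2 - b.2.2) := by
  have hd := dvd_HB P hP (Phi_dvd p P hP hdeg hx hG) b hb hbx
  have h1 := HB_eq hd hb1
  have h2 := HB_eq hd hb2
  have h3 : (Polynomial.C (b1.1 - b.1) * (Polynomial.C (b2.2.1 - b.2.1) * Polynomial.X +
      Polynomial.C (b2.2.2 - b.2.2)) - Polynomial.C (b2.1 - b.1) *
      (Polynomial.C (b1.2.1 - b.2.1) * Polynomial.X + Polynomial.C (b1.2.2 - b.2.2))) *
      evB b (pderiv 0 P) = 0 := by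
    linear_combination Polynomial.C (b1.1 - b.1) * h2 - Polynomial.C (b2.1 - b.1) * h1
  have h4 := (mul_eq_zero.1 h3).resolve_right hbx
  have e0 := congrArg (fun q => q.coeff 0) h4
  have e1 := congrArg (fun q => q.coeff 1) h4
  simp only [Polynomial.coeff_sub, Polynomial.coeff_C_mul, Polynomial.coeff_add,
    Polynomial.coeff_X_zero, Polynomial.coeff_X_one, Polynomial.coeff_C_zero,
    Polynomial.coeff_zero, Polynomial.coeff_C_succ, Polynomial.coeff_C] at e0 e1
  norm_num at e0 e1
  constructor
  · linear_combination e1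
  · linear_combination e0

end ruled

end EI


namespace EI

open MvPolynomial

section core

variable {K : Type*} [Field K]

lemma totalDegree_pderiv_lt (i : Fin 3) (P : MvPolynomial (Fin 3) K) (h : pderiv i P ≠ 0) :
    (pderiv i P).totalDegree < P.totalDegree := by
  have h1 : ∀ m ∈ (pderiv i P).support, (m.sum fun _ e => e) + 1 ≤ P.totalDegree := by
    intro m hm
    rw [mem_support_iff, coeff_pderiv] at hm
    have h2 : m + Finsupp.single i 1 ∈ P.support := by
      rw [mem_support_iff]; exact left_ne_zero_of_mul hm
    have h3 := le_totalDegree h2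
    rw [Finsupp.sum_add_index' (by simp) (by simp)] at h3
    simpa using h3
  obtain ⟨m, hm⟩ := (support_nonempty.2 h)
  have hpos : 0 < P.totalDegree := by have := h1 m hm; omega
  rw [totalDegree, Finset.sup_lt_iff (by simpa using hpos)]
  intro m hm
  have := h1 m hm
  omega

lemma totalDegree_pderiv_le (i : Fin 3) (P : MvPolynomial (Fin 3) K) :
    (pderiv i P).totalDegree ≤ P.totalDegree := by
  by_cases h : pderiv i P = 0
  · simp [h]
  · exact (totalDegree_pderiv_lt i P h).le

lemma totalDegree_tD (P f : MvPolynomial (Fin 3) K) :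
    (tD P f).totalDegree ≤ P.totalDegree + f.totalDegree := by
  rw [tD_apply]
  refine (totalDegree_sub _ _).trans (max_le ?_ ?_) <;>
  exact (totalDegree_mul _ _).trans
    (add_le_add (totalDegree_pderiv_le _ _) (totalDegree_pderiv_le _ _))

lemma totalDegree_curv (P : MvPolynomial (Fin 3) K) :
    (curv P).totalDegree ≤ 3 * P.totalDegree := by
  have h0 := totalDegree_pderiv_le 0 P
  have h2 := totalDegree_pderiv_le 2 P
  have t0 := totalDegree_tD P (pderiv 0 P)
  have t2 := totalDegree_tD P (pderiv 2 P)
  rw [curv]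
  refine (totalDegree_sub _ _).trans (max_le ?_ ?_) <;>
  refine (totalDegree_mul _ _).trans ?_ <;> omega

lemma not_dvd_pderiv (p : ℕ) [CharP K p] [Fact p.Prime]
    (P : MvPolynomial (Fin 3) K) (hP : Irreducible P) (hdeg : P.totalDegree < p)
    (W : Finset (K × K × K)) (hinj : Set.InjOn (fun r : K × K × K => r.2.2) W)
    (hW : ∀ r ∈ W, evR r P = 0) (hcard : 3 * P.totalDegree < W.card) : ¬ P ∣ pderiv 0 P := by
  classical
  intro hdvd
  by_cases h0 : pderiv 0 P = 0
  · have hv : (0 : Fin 3) ∉ P.vars := by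
      intro hv
      rw [mem_vars_iff_mem_support] at hv
      obtain ⟨m, hm, hm0⟩ := hv
      have hm0' : m 0 ≠ 0 := by simpa using hm0
      set m' := m - Finsupp.single 0 1 with hm'
      have hmm : m' + Finsupp.single 0 1 = m := by
        ext i
        by_cases hi : i = 0
        · subst hi; simp [hm']; omega
        · simp [hm', Finsupp.single_apply, Ne.symm hi]
      have h1 := coeff_pderiv (i := (0 : Fin 3)) P m'
      rw [h0, hmm, coeff_zero] at h1
      rcases mul_eq_zero.1 h1.symm with h2 | h2
      · exact (mem_support_iff.1 hm) h2
      · have h3 : ((m 0 : ℕ) : K) = 0 := by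
          rw [← h2]
          have : m 0 = m' 0 + 1 := by simp [hm']; omega
          rw [this]; push_cast; rfl
        rw [CharP.cast_eq_zero_iff K p] at h3
        have h4 := Nat.le_of_dvd (by omega) h3
        have h5 : m 0 ≤ P.totalDegree :=
          (le_degreeOf_of_mem_support 0 hm).trans (degreeOf_le_totalDegree _ _)
        omega
    have hnd : ¬ P ∣ X 0 := by
      rintro ⟨c, hc⟩
      have := congrArg (pderiv 0) hc
      rw [pderiv_X_self, Derivation.leibniz, h0] at this
      simp only [smul_eq_mul, mul_zero, add_zero] at this
      exact hP.not_isUnit (IsUnit.of_mul_eq_one _ this.symm)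
    have hev : ∀ r, evR (0, 0, r.2.2) P = evR r P := by
      intro r
      have := hom_congr_vars (f₁ := (evR (0,0,r.2.2)).toRingHom) (f₂ := (evR r).toRingHom)
        (p₁ := P) (p₂ := P) (by ext a; simp [evR]) (by
          intro i hi _
          fin_cases i
          · exact absurd hi hv
          · simp [evR]
          · simp [evR]) rfl
      exact this
    have := bezout P (X 0) hP hnd (W.image (fun r => ((0:K), (0:K), r.2.2))) (by
        intro r hr r' hr' h
        simp only [Finset.coe_image, Set.mem_image, Finset.mem_coe] at hr hr'
        obtain ⟨z, _, rfl⟩ := hr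
        obtain ⟨z', _, rfl⟩ := hr'
        have : z.2.2 = z'.2.2 := h
        rw [this])
      (by
        intro r hr
        obtain ⟨z, hz, rfl⟩ := Finset.mem_image.1 hr
        rw [hev]; exact hW z hz)
      (by
        intro r hr
        obtain ⟨z, hz, rfl⟩ := Finset.mem_image.1 hr
        simp [evR])
    rw [Finset.card_image_of_injOn (by
      intro r hr r' hr' h
      apply hinj hr hr'
      simpa using h), totalDegree_X] at this
    omega
  · have h1 := totalDegree_le_of_dvd_of_isDomain hdvd h0
    have h2 := totalDegree_pderiv_lt 0 P h0
    omega

lemma select_irred (κ : ℕ) (T : MvPolynomial (Fin 3) K) :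
    T ≠ 0 → ∀ W : Finset (K × K × K), (∀ r ∈ W, evR r T = 0) → κ * T.totalDegree < W.card →
    ∃ P, Irreducible P ∧ P ∣ T ∧ ∃ W' ⊆ W, (∀ r ∈ W', evR r P = 0) ∧
      κ * P.totalDegree < W'.card := by
  classical
  induction T using WfDvdMonoid.induction_on_irreducible with
  | zero => intro h; exact absurd rfl h
  | unit u hu =>
    intro _ W hW hc
    have : W.Nonempty := Finset.card_pos.1 (by omega)
    obtain ⟨r, hr⟩ := this
    have h1 := hW r hr
    exact absurd h1 ((hu.map (evR r)).ne_zero)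
  | mul a i ha hi ih =>
    intro hne W hW hc
    rw [totalDegree_mul_of_isDomain hi.ne_zero ha] at hc
    by_cases h1 : κ * i.totalDegree < (W.filter (fun r => evR r i = 0)).card
    · exact ⟨i, hi, dvd_mul_right _ _, _, Finset.filter_subset _ _, by simp, h1⟩
    · obtain ⟨P, hP, hPd, W', hW', h2, h3⟩ := ih ha (W.filter (fun r => ¬ evR r i = 0)) (by
        intro r hr
        rw [Finset.mem_filter] at hr
        have := hW r hr.1
        rw [map_mul] at this
        exact (mul_eq_zero.1 this).resolve_left hr.2) (by
        have := Finset.card_filter_add_card_filter_not (s := W) (fun r => evR r i = 0)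
        rw [mul_add] at hc
        omega)
      exact ⟨P, hP, hPd.mul_left _, W', hW'.trans (Finset.filter_subset _ _), h2, h3⟩

/-- the exponent vector -/
noncomputable def expo {e : ℕ} (i : Fin (e+1) × Fin (e+1) × Fin (e+1)) : Fin 3 →₀ ℕ :=
  Finsupp.equivFunOnFinite.symm ![(i.1 : ℕ), (i.2.1 : ℕ), (i.2.2 : ℕ)]

lemma expo_inj {e : ℕ} : Function.Injective (expo (e := e)) := by
  intro i j h
  have h0 := DFunLike.congr_fun h 0
  have h1 := DFunLike.congr_fun h 1
  have h2 := DFunLike.congr_fun h 2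
  simp [expo] at h0 h1 h2
  ext <;> simp_all

lemma exists_poly (e : ℕ) (S : Finset (K × K × K)) (hS : (2 * e + 1) * S.card < (e + 1) ^ 3) :
    ∃ T : MvPolynomial (Fin 3) K, T ≠ 0 ∧ T.totalDegree ≤ 3 * e ∧ ∀ r ∈ S, evR r T = 0 := by
  classical
  let I := Fin (e+1) × Fin (e+1) × Fin (e+1)
  let mk : (I → K) →ₗ[K] MvPolynomial (Fin 3) K :=
    ∑ i : I, (MvPolynomial.monomial (expo i)).comp (LinearMap.proj i)
  have mk_apply : ∀ c, mk c = ∑ i : I, MvPolynomial.monomial (expo i) (c i) := by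
    intro c; simp [mk]
  let φ : (I → K) →ₗ[K] (S → Fin (2 * e + 1) → K) :=
    LinearMap.pi fun r => LinearMap.pi fun j =>
      (Polynomial.lcoeff K j).comp ((evR r.1).toLinearMap.comp mk)
  have hker : LinearMap.ker φ ≠ ⊥ := by
    apply LinearMap.ker_ne_bot_of_finrank_lt
    have h1 : Module.finrank K (S → Fin (2 * e + 1) → K) = (2 * e + 1) * S.card := by
      rw [Module.finrank_pi_fintype]; simp; ring
    have h2 : Module.finrank K (I → K) = (e + 1) ^ 3 := by
      simp [I]; ring
    rw [h1, h2]; exact hS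
  obtain ⟨c, hc, hc0⟩ := (Submodule.ne_bot_iff _).1 hker
  have hdegi : ∀ i : I, ∀ a, (MvPolynomial.monomial (expo i) a : MvPolynomial (Fin 3) K).totalDegree ≤ 3 * e := by
    intro i a
    refine (totalDegree_monomial_le _ _).trans ?_
    rw [Finsupp.sum_fintype _ _ (by simp)]
    simp only [Fin.sum_univ_three, expo]
    have := i.1.2; have := i.2.1.2; have := i.2.2.2
    simp
    omega
  refine ⟨mk c, ?_, ?_, ?_⟩
  · intro h
    apply hc0
    funext i
    have := congrArg (coeff (expo i)) h
    rw [mk_apply, coeff_sum] at this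
    simp only [coeff_monomial, coeff_zero] at this
    rw [Finset.sum_eq_single i] at this
    · simpa using this
    · intro j _ hj
      rw [if_neg (fun h => hj (expo_inj h))]
    · simp
  · rw [mk_apply]
    exact totalDegree_finsetSum_le fun i _ => hdegi i _
  · intro r hr
    have hnd : (evR r (mk c)).natDegree ≤ 2 * e := by
      rw [mk_apply, map_sum]
      apply Polynomial.natDegree_sum_le_of_forall_le
      intro i _
      rw [evR, aeval_monomial, Finsupp.prod_fintype _ _ (by simp)]
      simp only [Fin.prod_univ_three, expo]
      have e0 := i.1.2; have := i.2.1.2; have e2 := i.2.2.2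
      have hl : (Polynomial.C r.1 * Polynomial.X - Polynomial.C r.2.1 : Polynomial K).natDegree ≤ 1 := by
        refine (Polynomial.natDegree_sub_le _ _).trans ?_
        simpa using (Polynomial.natDegree_C_mul_le r.1 Polynomial.X).trans Polynomial.natDegree_X_le
      have h1 : ((Polynomial.C r.1 * Polynomial.X - Polynomial.C r.2.1 : Polynomial K) ^ (i.1 : ℕ)).natDegree ≤ e := by
        refine Polynomial.natDegree_pow_le.trans ?_
        calc (i.1 : ℕ) * _ ≤ (i.1 : ℕ) * 1 := Nat.mul_le_mul_left _ hl
          _ ≤ e := by omega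
      have h2 : ((Polynomial.X : Polynomial K) ^ (i.2.2 : ℕ)).natDegree ≤ e := by
        rw [Polynomial.natDegree_X_pow]; omega
      have h3 : ((Polynomial.C r.2.2 : Polynomial K) ^ (i.2.1 : ℕ)).natDegree ≤ 0 := by
        rw [← Polynomial.C_pow, Polynomial.natDegree_C]
      have h4 : ((algebraMap K (Polynomial K)) (c i)).natDegree ≤ 0 := by
        rw [Polynomial.algebraMap_eq, Polynomial.natDegree_C]
      simp only [Finsupp.equivFunOnFinite_symm_apply_apply, Matrix.cons_val_zero, Matrix.cons_val_one,
        Matrix.cons_val]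
      refine Polynomial.natDegree_mul_le.trans ?_
      refine (Nat.add_le_add h4 (Polynomial.natDegree_mul_le.trans
        (Nat.add_le_add (Polynomial.natDegree_mul_le.trans (Nat.add_le_add h1 h3)) h2))).trans ?_
      omega
    ext j
    by_cases hj : j < 2 * e + 1
    · have h1 : φ c = 0 := hc
      have := congrFun (congrFun h1 ⟨r, hr⟩) ⟨j, hj⟩
      simpa [φ] using this
    · rw [Polynomial.coeff_eq_zero_of_natDegree_lt (by omega)]
      simp

/-- a polynomial with many roots vanishes -/
lemma poly_zero_of_card (q : Polynomial K) {ι : Type*} (S : Finset ι) (f : ι → K)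
    (hf : Set.InjOn f S) (h : ∀ i ∈ S, q.eval (f i) = 0) (hc : q.natDegree < S.card) : q = 0 := by
  classical
  apply Polynomial.eq_zero_of_natDegree_lt_card_of_eval_eq_zero' q (S.image f)
  · intro x hx
    obtain ⟨i, hi, rfl⟩ := Finset.mem_image.1 hx
    exact h i hi
  · rwa [Finset.card_image_of_injOn hf]

lemma card_le_of_poly (q : Polynomial K) (hq : q ≠ 0) {ι : Type*} (S : Finset ι) (f : ι → K)
    (hf : Set.InjOn f S) (h : ∀ i ∈ S, q.eval (f i) = 0) : S.card ≤ q.natDegree := by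
  by_contra hc
  exact hq (poly_zero_of_card q S f hf h (by omega))

lemma evR_derivative (r : K × K × K) (f : MvPolynomial (Fin 3) K) :
    Polynomial.derivative (evR r f) =
      Polynomial.C r.1 * evR r (pderiv 0 f) + evR r (pderiv 2 f) := by
  induction f using MvPolynomial.induction_on with
  | C a => simp [evR]
  | add p q hp hq => simp only [map_add, hp, hq]; ring
  | mul_X p i hp =>
    have key : Polynomial.derivative (evR r (X i)) =
      Polynomial.C r.1 * evR r (pderiv 0 (X i)) + evR r (pderiv 2 (X i)) := by
      fin_cases i <;> simp [evR, pderiv_X]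
    simp only [map_mul, Polynomial.derivative_mul, Derivation.leibniz, smul_eq_mul, map_add, hp, key]
    ring

lemma evR_curv (r : K × K × K) (P : MvPolynomial (Fin 3) K) (h : evR r P = 0) :
    evR r (curv P) = 0 := by
  have h1 := evR_derivative r P
  rw [h, Polynomial.derivative_zero] at h1
  have h2 := evR_derivative r (pderiv 0 P)
  have h3 := evR_derivative r (pderiv 2 P)
  have h4 : Polynomial.derivative (evR r (pderiv 2 P)) =
      - (Polynomial.C r.1 * Polynomial.derivative (evR r (pderiv 0 P))) := by
    have : evR r (pderiv 2 P) = - (Polynomial.C r.1 * evR r (pderiv 0 P)) := by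
      linear_combination - h1
    rw [this]; simp
  have h5 : evR r (pderiv 2 P) = - (Polynomial.C r.1 * evR r (pderiv 0 P)) := by
      linear_combination - h1
  simp only [curv, tD_apply, map_sub, map_mul]
  rw [h3, h2] at h4
  rw [h5]
  linear_combination (evR r (pderiv 0 P)) ^ 2 * h4

lemma pow_eq_zero_aux {q : Polynomial K} {n : ℕ} (h : q ^ n = 0) : q = 0 := by
  by_contra hq
  exact pow_ne_zero n hq h

set_option maxHeartbeats 800000 in
open Classical in
lemma core (p : ℕ) [CharP K p] [Fact p.Prime] [Infinite K]
    (R B S : Finset (K × K × K)) (s D e : ℕ)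
    (hw : Set.InjOn (fun r : K × K × K => r.2.2) R)
    (hβ : ∀ r ∈ R, Set.InjOn (fun b : K × K × K => b.1) {b | b ∈ B ∧ Inc r b})
    (hr : ∀ r ∈ R, s ≤ (B.filter (fun b => Inc r b)).card)
    (hSR : S ⊆ R) (hS : (2 * e + 1) * S.card < (e + 1) ^ 3)
    (hb : ∀ b ∈ B, 3 * e < (S.filter (fun r => Inc r b)).card)
    (hR : 13 * (3 * e) ^ 2 < R.card) (hp : 3 * e < p)
    (hs : 6 * e + D < s) (hs' : 6 * e + 1 < s)
    (hD : ∀ b ∈ B, ∀ b1 ∈ B, b1.1 ≠ b.1 → (B.filter (fun b2 =>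
      (b1.1 - b.1) * (b2.2.1 - b.2.1) = (b2.1 - b.1) * (b1.2.1 - b.2.1) ∧
      (b1.1 - b.1) * (b2.2.2 - b.2.2) = (b2.1 - b.1) * (b1.2.2 - b.2.2))).card ≤ D) : False := by
  obtain ⟨T, hT0, hTd, hTS⟩ := exists_poly e S hS
  have hTB : ∀ b ∈ B, evB b T = 0 := by
    intro b hbB
    apply poly_zero_of_card _ (S.filter (fun r => Inc r b)) (fun r => r.2.2)
      (hw.mono (by intro r hr; exact hSR (Finset.mem_filter.1 hr).1))
    · intro r hr
      rw [Finset.mem_filter] at hr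
      rw [← ev_inc hr.2, hTS r hr.1, Polynomial.eval_zero]
    · have := evB_natDegree b T
      have := hb b hbB
      omega
  have hβ' : ∀ r ∈ R, Set.InjOn (fun b : K × K × K => b.1) (B.filter (fun b => Inc r b) : Finset _) := by
    intro r hr
    simpa using hβ r hr
  have hTR : ∀ r ∈ R, evR r T = 0 := by
    intro r hrR
    apply poly_zero_of_card _ (B.filter (fun b => Inc r b)) (fun b => b.1) (hβ' r hrR)
    · intro b hb
      rw [Finset.mem_filter] at hb
      rw [ev_inc hb.2, hTB b hb.1, Polynomial.eval_zero]
    · have := evR_natDegree r T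
      have := hr r hrR
      omega
  obtain ⟨P, hP, hPT, W, hWR, hWP, hWc⟩ := select_irred (13 * (3 * e)) T hT0 R hTR (by
    calc _ ≤ 13 * (3 * e) * (3 * e) := Nat.mul_le_mul_left _ hTd
      _ < _ := by rw [mul_assoc, ← sq]; exact hR)
  set a := P.totalDegree with ha
  set d := 3 * e with hd
  have had : a ≤ d := (totalDegree_le_of_dvd_of_isDomain hPT hT0).trans hTd
  have ha2 : a ≤ a * d := by
    rcases Nat.eq_zero_or_pos a with h | h
    · rw [h]; simp
    · exact Nat.le_mul_of_pos_right _ (by omega)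
  have haa : a * a ≤ a * d := Nat.mul_le_mul_left _ had
  have hwW := hw.mono (show (W : Set (K × K × K)) ⊆ R from by exact_mod_cast hWR)
  have hcurv : P ∣ curv P := by
    by_contra hnd
    have h1 := bezout P (curv P) hP hnd W hwW hWP (fun r hr => evR_curv r P (hWP r hr))
    have h2 := totalDegree_curv P
    rw [← ha] at h1 h2
    have h3 : 2 * a * (curv P).totalDegree ≤ 2 * a * (3 * a) := Nat.mul_le_mul_left _ h2
    nlinarith
  have hpx : ¬ P ∣ pderiv 0 P := by
    apply not_dvd_pderiv p P hP (by omega) W hwW hWP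
    rw [← ha]
    nlinarith
  obtain ⟨T', hT', hPT'⟩ := (FiniteMultiplicity.of_not_isUnit hP.not_isUnit hT0).exists_eq_pow_mul_and_not_dvd
  have hT'd : T'.totalDegree ≤ d :=
    (totalDegree_le_of_dvd_of_isDomain (Dvd.intro_left _ hT'.symm) hT0).trans hTd
  have hxd : (pderiv 0 P).totalDegree ≤ a := totalDegree_pderiv_le 0 P
  have hfilt : ∀ F : MvPolynomial (Fin 3) K, ¬ P ∣ F → F.totalDegree ≤ d →
      (W.filter (fun r => evR r F = 0)).card ≤ 3 * (a * d) := by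
    intro F hF hFd
    have h1 := bezout P F hP hF (W.filter (fun r => evR r F = 0))
      (hwW.mono (by intro r hr; exact (Finset.mem_filter.1 hr).1))
      (fun r hr => hWP r (Finset.mem_filter.1 hr).1) (fun r hr => (Finset.mem_filter.1 hr).2)
    have h3 : 2 * a * F.totalDegree ≤ 2 * a * d := Nat.mul_le_mul_left _ hFd
    rw [← ha] at h1
    nlinarith
  have hf1 := hfilt T' hPT' hT'd
  have hf2 := hfilt (pderiv 0 P) hpx (hxd.trans had)
  have hex : ∃ r ∈ W, evR r T' ≠ 0 ∧ evR r (pderiv 0 P) ≠ 0 := by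
    by_contra hcon
    push Not at hcon
    have hsub : W ⊆ W.filter (fun r => evR r T' = 0) ∪ W.filter (fun r => evR r (pderiv 0 P) = 0) := by
      intro r hr
      rw [Finset.mem_union, Finset.mem_filter, Finset.mem_filter]
      by_cases h : evR r T' = 0
      · exact Or.inl ⟨hr, h⟩
      · exact Or.inr ⟨hr, hcon r hr h⟩
    have := (Finset.card_le_card hsub).trans (Finset.card_union_le _ _)
    nlinarith
  obtain ⟨r, hrW, hrT, hrx⟩ := hex
  have hrR := hWR hrW
  set N := B.filter (fun b => Inc r b) with hN
  have hcnt : ∀ F : MvPolynomial (Fin 3) K, evR r F ≠ 0 → F.totalDegree ≤ d →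
      (N.filter (fun b => evB b F = 0)).card ≤ d := by
    intro F hF hFd
    refine (card_le_of_poly (evR r F) hF _ (fun b => b.1) ((hβ' r hrR).mono ?_) ?_).trans
      ((evR_natDegree r F).trans hFd)
    · intro b hb; exact (Finset.mem_filter.1 hb).1
    · intro b hb
      rw [Finset.mem_filter, hN, Finset.mem_filter] at hb
      rw [ev_inc hb.1.2, hb.2, Polynomial.eval_zero]
  have hc1 := hcnt T' hrT hT'd
  have hc2 := hcnt _ hrx (hxd.trans had)
  set G := N.filter (fun b => evB b T' ≠ 0 ∧ evB b (pderiv 0 P) ≠ 0) with hG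
  have hNsub : N ⊆ (N.filter (fun b => evB b T' = 0) ∪ N.filter (fun b => evB b (pderiv 0 P) = 0)) ∪ G := by
    intro b hb
    simp only [Finset.mem_union, Finset.mem_filter, hG]
    tauto
  have hNc : N.card ≤ d + d + G.card := by
    refine (Finset.card_le_card hNsub).trans ((Finset.card_union_le _ _).trans ?_)
    have := Finset.card_union_le (N.filter (fun b => evB b T' = 0)) (N.filter (fun b => evB b (pderiv 0 P) = 0))
    omega
  have hrs : s ≤ N.card := hr r hrR
  have hG1 : 1 < G.card := by omega
  have hGD : D < G.card := by omega
  have hGB : ∀ b ∈ G, b ∈ B := fun b hb => (Finset.mem_filter.1 (Finset.mem_filter.1 hb).1).1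
  have hGP : ∀ b ∈ G, evB b P = 0 := by
    intro b hb
    have h1 := hTB b (hGB b hb)
    rw [hT', map_mul, map_pow] at h1
    have h2 := (mul_eq_zero.1 h1).resolve_right (Finset.mem_filter.1 hb).2.1
    exact pow_eq_zero_aux h2
  obtain ⟨b, hbG, b1, hb1G, hbb⟩ := Finset.one_lt_card.1 hG1
  have hne : b1.1 ≠ b.1 := by
    intro h
    exact hbb (hβ' r hrR (Finset.mem_filter.1 hbG).1 (Finset.mem_filter.1 hb1G).1 h.symm)
  have hfin := hD b (hGB b hbG) b1 (hGB b1 hb1G) hne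
  have hsub : G ⊆ (B.filter (fun b2 =>
      (b1.1 - b.1) * (b2.2.1 - b.2.1) = (b2.1 - b.1) * (b1.2.1 - b.2.1) ∧
      (b1.1 - b.1) * (b2.2.2 - b.2.2) = (b2.1 - b.1) * (b1.2.2 - b.2.2))) := by
    intro b2 hb2
    rw [Finset.mem_filter]
    exact ⟨hGB b2 hb2, ruled_conclusion p P hP (by omega) hpx hcurv b b1 b2 (hGP b hbG)
      (hGP b1 hb1G) (hGP b2 hb2) (Finset.mem_filter.1 hbG).2.2⟩
  have := Finset.card_le_card hsub
  omega

end core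
end EI


namespace EI

section comb

open Classical in
lemma prune {α β : Type*} (rel : α → β → Prop) (s : ℕ) (n : ℕ) : ∀ (R : Finset α) (B : Finset β),
    R.card + B.card ≤ n →
    s * (R.card + B.card) < ∑ r ∈ R, (B.filter (fun b => rel r b)).card →
    ∃ R' ⊆ R, ∃ B' ⊆ B, R'.Nonempty ∧ (∀ r ∈ R', s ≤ (B'.filter (fun b => rel r b)).card) ∧
      (∀ b ∈ B', s ≤ (R'.filter (fun r => rel r b)).card) := by
  induction n with
  | zero =>
    intro R B h h2
    have : R = ∅ := Finset.card_eq_zero.1 (by omega)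
    subst this
    simp at h2
  | succ n ih =>
    intro R B h h2
    by_cases hr : ∃ r ∈ R, (B.filter (fun b => rel r b)).card < s
    · obtain ⟨r, hrR, hrs⟩ := hr
      have hc := Finset.card_erase_add_one hrR
      obtain ⟨R', hR', B', hB', h3⟩ := ih (R.erase r) B (by omega) (by
        rw [← Finset.add_sum_erase R _ hrR] at h2
        have : s * (R.card + B.card) = s * ((R.erase r).card + B.card) + s := by
          rw [← hc]; ring
        omega)
      exact ⟨R', hR'.trans (Finset.erase_subset _ _), B', hB', h3⟩
    · by_cases hb : ∃ b ∈ B, (R.filter (fun r => rel r b)).card < s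
      · obtain ⟨b, hbB, hbs⟩ := hb
        have hc := Finset.card_erase_add_one hbB
        have hsw : ∀ B : Finset β, ∑ r ∈ R, (B.filter (fun b => rel r b)).card
            = ∑ b ∈ B, (R.filter (fun r => rel r b)).card := fun B =>
          Finset.sum_card_bipartiteAbove_eq_sum_card_bipartiteBelow rel
        obtain ⟨R', hR', B', hB', h3⟩ := ih R (B.erase b) (by omega) (by
          rw [hsw] at h2 ⊢
          rw [← Finset.add_sum_erase B _ hbB] at h2
          have : s * (R.card + B.card) = s * (R.card + (B.erase b).card) + s := by
            rw [← hc]; ring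
          omega)
        exact ⟨R', hR', B', hB'.trans (Finset.erase_subset _ _), h3⟩
      · push Not at hr hb
        refine ⟨R, subset_rfl, B, subset_rfl, ?_, hr, hb⟩
        rw [Finset.nonempty_iff_ne_empty]
        rintro rfl
        simp at h2

open Classical in
lemma coloring {α β : Type*} (rel : α → β → Prop) (n : ℕ) (hn : 0 < n) (B : Finset β) (R : Finset α) :
    ∀ W : β → Fin n → ℝ, (∀ b i, 0 ≤ W b i) →
    ∃ f : α → Fin n,
      ∑ b ∈ B, ∑ i, W b i * (1/2 : ℝ) ^ (R.filter (fun r => rel r b ∧ f r = i)).card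
      ≤ ∑ b ∈ B, ∑ i, W b i * (1 - 1/(2*n) : ℝ) ^ (R.filter (fun r => rel r b)).card := by
  induction R using Finset.induction_on with
  | empty =>
    intro W hW
    exact ⟨fun _ => ⟨0, hn⟩, by simp⟩
  | insert r0 R hr0 ih =>
    intro W hW
    have hn' : (0:ℝ) < n := by exact_mod_cast hn
    let W' : Fin n → β → Fin n → ℝ := fun j b i => W b i * (if rel r0 b ∧ j = i then 1/2 else 1)
    have havg : ∑ j : Fin n, ∑ b ∈ B, ∑ i, W' j b i * (1 - 1/(2*n) : ℝ) ^ (R.filter (fun r => rel r b)).card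
       ≤ ∑ j : Fin n, ∑ b ∈ B, ∑ i, W b i * (1 - 1/(2*n) : ℝ) ^ ((insert r0 R).filter (fun r => rel r b)).card := by
      apply le_of_eq
      rw [Finset.sum_comm]
      rw [Finset.sum_comm (s := Finset.univ) (t := B)]
      refine Finset.sum_congr rfl fun b _ => ?_
      rw [Finset.sum_comm]
      rw [Finset.sum_comm (s := (Finset.univ : Finset (Fin n))) (t := (Finset.univ : Finset (Fin n)))
        (f := fun j i => W b i * (1 - 1/(2*n) : ℝ) ^ ((insert r0 R).filter (fun r => rel r b)).card)]
      refine Finset.sum_congr rfl fun i _ => ?_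
      by_cases hb : rel r0 b
      · have h1 : ((insert r0 R).filter (fun r => rel r b)).card = (R.filter (fun r => rel r b)).card + 1 := by
          rw [Finset.filter_insert, if_pos hb, Finset.card_insert_of_notMem]
          simp [hr0]
        rw [h1]
        simp only [W', hb, true_and]
        rw [← Finset.sum_mul, ← Finset.mul_sum]
        have h2 : ∑ j : Fin n, (if j = i then (1/2:ℝ) else 1) = n - 1/2 := by
          have : ∀ j : Fin n, (if j = i then (1/2:ℝ) else 1) = 1 - if j = i then (1/2:ℝ) else 0 := by
            intro j; split_ifs <;> norm_num
          rw [Finset.sum_congr rfl (fun j _ => this j), Finset.sum_sub_distrib]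
          simp
        rw [h2, Finset.sum_const, Finset.card_univ, Fintype.card_fin, pow_succ, nsmul_eq_mul]
        field_simp
      · have h1 : ((insert r0 R).filter (fun r => rel r b)) = (R.filter (fun r => rel r b)) := by
          rw [Finset.filter_insert, if_neg hb]
        rw [h1]
        simp only [W', hb, false_and, if_false, mul_one]
    obtain ⟨j, _, hj⟩ := Finset.exists_le_of_sum_le (Finset.univ_nonempty_iff.2 ⟨⟨0, hn⟩⟩) havg
    obtain ⟨f, hf⟩ := ih (W' j) (by
      intro b i
      apply mul_nonneg (hW b i)
      split_ifs <;> norm_num)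
    refine ⟨Function.update f r0 j, ?_⟩
    refine le_trans (le_of_eq ?_) (hf.trans hj)
    refine Finset.sum_congr rfl fun b _ => Finset.sum_congr rfl fun i _ => ?_
    have h3 : (R.filter (fun r => rel r b ∧ Function.update f r0 j r = i)) =
        R.filter (fun r => rel r b ∧ f r = i) := by
      apply Finset.filter_congr
      intro r hr
      have : r ≠ r0 := fun h => hr0 (h ▸ hr)
      rw [Function.update_of_ne this]
    rw [Finset.filter_insert, h3]
    simp only [Function.update_self, W']
    split_ifs with h
    · rw [Finset.card_insert_of_notMem (by simp [hr0]), pow_succ]; ring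
    · ring

lemma pow800 : (1 - 1/(2*(400:ℕ)) : ℝ) ^ 800 ≤ 1/2 := by
  have h := one_add_mul_le_pow (a := (1/799:ℝ)) (by norm_num) 800
  have h2 : (1 - 1/(2*(400:ℕ)) : ℝ) = (1 + 1/799)⁻¹ := by norm_num
  rw [h2, inv_pow, show (1/2:ℝ) = 2⁻¹ by norm_num]
  apply inv_anti₀ (by norm_num)
  refine le_trans ?_ h
  norm_num

open Classical in
lemma sampling {α β : Type*} (rel : α → β → Prop) (B : Finset β) (R : Finset α) (s d k : ℕ)
    (hs : 800 * (d + k) ≤ s) (hk : 400 * B.card < 2 ^ k)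
    (hB : ∀ b ∈ B, s ≤ (R.filter (fun r => rel r b)).card) :
    ∃ S ⊆ R, 400 * S.card ≤ R.card ∧ ∀ b ∈ B, d < (S.filter (fun r => rel r b)).card := by
  obtain ⟨f, hf⟩ := coloring rel 400 (by norm_num) B R (fun _ _ => 1) (by intros; norm_num)
  simp only [one_mul] at hf
  have hub : ∑ b ∈ B, ∑ i : Fin 400, (1 - 1/(2*(400:ℕ)) : ℝ) ^ (R.filter (fun r => rel r b)).card
      < (1/2)^d := by
    have h1 : ∀ b ∈ B, ∑ i : Fin 400, (1 - 1/(2*(400:ℕ)) : ℝ) ^ (R.filter (fun r => rel r b)).card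
        ≤ 400 * (1/2)^(d+k) := by
      intro b hb
      rw [Finset.sum_const, Finset.card_univ, Fintype.card_fin, nsmul_eq_mul]
      push_cast
      apply mul_le_mul_of_nonneg_left _ (by norm_num)
      have h0 : (0:ℝ) ≤ (1 - 1/(2*(400:ℕ)) : ℝ) := by norm_num
      have h1' : (1 - 1/(2*(400:ℕ)) : ℝ) ≤ 1 := by norm_num
      calc (1 - 1/(2*400) : ℝ) ^ (R.filter (fun r => rel r b)).card
          ≤ (1 - 1/(2*(400:ℕ)) : ℝ) ^ (800 * (d+k)) := by
            push_cast
            exact pow_le_pow_of_le_one (by norm_num) (by norm_num) (hs.trans (hB b hb))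
        _ = ((1 - 1/(2*(400:ℕ)) : ℝ) ^ 800) ^ (d+k) := by rw [pow_mul]
        _ ≤ (1/2)^(d+k) := pow_le_pow_left₀ (pow_nonneg h0 _) pow800 _
    calc _ ≤ ∑ b ∈ B, 400 * (1/2:ℝ)^(d+k) := Finset.sum_le_sum h1
      _ = (400 * B.card) * (1/2:ℝ)^k * (1/2)^d := by
        rw [Finset.sum_const, nsmul_eq_mul, pow_add]; ring
      _ < (2:ℝ)^k * (1/2:ℝ)^k * (1/2)^d := by
        have : (400 * B.card : ℝ) < 2 ^ k := by exact_mod_cast hk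
        gcongr
      _ = _ := by rw [← mul_pow]; norm_num
  have hcol : ∃ i : Fin 400, 400 * (R.filter (fun r => f r = i)).card ≤ R.card := by
    have h1 := Finset.card_eq_sum_card_fiberwise (s := R) (t := (Finset.univ : Finset (Fin 400))) (f := f)
      (by intro x _; simp)
    by_contra hcon
    push Not at hcon
    have h2 : ∑ i : Fin 400, R.card < ∑ i : Fin 400, 400 * (R.filter (fun r => f r = i)).card :=
      Finset.sum_lt_sum_of_nonempty ⟨0, by simp⟩ (fun i _ => hcon i)
    rw [← Finset.mul_sum, ← h1] at h2
    simp at h2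
  obtain ⟨i, hi⟩ := hcol
  refine ⟨_, Finset.filter_subset _ _, hi, ?_⟩
  intro b hb
  have h1 : (1/2 : ℝ) ^ (R.filter (fun r => rel r b ∧ f r = i)).card < (1/2)^d := by
    refine lt_of_le_of_lt ?_ (hf.trans_lt hub)
    refine le_trans ?_ (Finset.single_le_sum (f := fun b => ∑ i, (1/2 : ℝ) ^ (R.filter (fun r => rel r b ∧ f r = i)).card) (fun b _ => Finset.sum_nonneg fun i _ => by positivity) hb)
    exact Finset.single_le_sum (f := fun i => (1/2 : ℝ) ^ (R.filter (fun r => rel r b ∧ f r = i)).card) (fun i _ => by positivity) (Finset.mem_univ i)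
  have h2 := (pow_lt_pow_iff_right_of_lt_one₀ (by norm_num : (0:ℝ) < 1/2) (by norm_num)).1 h1
  rw [Finset.filter_filter]
  have h3 : (R.filter (fun r => f r = i ∧ rel r b)) = R.filter (fun r => rel r b ∧ f r = i) :=
    Finset.filter_congr (fun r _ => and_comm)
  rw [h3]; exact h2

end comb

open Classical in
theorem pointplane {K : Type*} [Field K] (p : ℕ) [CharP K p] [Fact p.Prime] [Infinite K]
    (R B : Finset (K × K × K)) (s D q : ℕ)
    (hw : Set.InjOn (fun r : K × K × K => r.2.2) R)
    (hβ : ∀ r ∈ R, Set.InjOn (fun b : K × K × K => b.1) {b | b ∈ B ∧ Inc r b})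
    (hq : 1 ≤ q) (hRq : R.card ≤ q ^ 2) (hBq : B.card ≤ q ^ 2) (hRp : R.card ≤ p ^ 2)
    (hsq : 12000 * q ≤ s) (hsD : 2 * D ≤ s)
    (hD : ∀ b ∈ B, ∀ b1 ∈ B, b1.1 ≠ b.1 → (B.filter (fun b2 =>
      (b1.1 - b.1) * (b2.2.1 - b.2.1) = (b2.1 - b.1) * (b1.2.1 - b.2.1) ∧
      (b1.1 - b.1) * (b2.2.2 - b.2.2) = (b2.1 - b.1) * (b1.2.2 - b.2.2))).card ≤ D) :
    ∑ r ∈ R, (B.filter (fun b => Inc r b)).card ≤ s * (R.card + B.card) := by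
  by_contra hcon
  push Not at hcon
  obtain ⟨R', hR', B', hB', hne, hr, hb⟩ := prune Inc s _ R B le_rfl hcon
  have hRc := Finset.card_le_card hR'
  have hBc := Finset.card_le_card hB'
  have hpos := Finset.card_pos.2 hne
  set e := Nat.sqrt (R'.card / 200) with he
  have he1 : e ^ 2 ≤ R'.card / 200 := Nat.sqrt_le' _
  have he2 : R'.card / 200 < (e + 1) ^ 2 := Nat.lt_succ_sqrt' _
  have he3 : 200 * e ^ 2 ≤ R'.card := by omega
  have he4 : R'.card < 200 * (e + 1) ^ 2 := by omega
  have heq : e ≤ q := by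
    by_contra h
    push Not at h
    nlinarith
  obtain ⟨S, hSR, hSc, hSb⟩ := sampling Inc B' R' s (3 * e) (9 + 2 * q) (by omega) (by
    have h1 : q < 2 ^ q := Nat.lt_two_pow_self
    have h2 : q ^ 2 < (2 ^ q) ^ 2 := Nat.pow_lt_pow_left h1 (by norm_num)
    rw [pow_add, pow_mul', show 2 ^ 9 = 512 by norm_num]
    omega) hb
  refine core p R' B' S s D e (hw.mono (by exact_mod_cast hR')) ?_ hr hSR ?_ hSb ?_ ?_ ?_ ?_ ?_
  · intro r hr
    exact (hβ r (hR' hr)).mono (by rintro b ⟨h1, h2⟩; exact ⟨hB' h1, h2⟩)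
  · have h1 : 2 * S.card < (e+1)^2 := by omega
    have h2 : (2 * e + 1) * S.card ≤ (e + 1) * (2 * S.card) := by nlinarith
    have h3 : (e + 1) * (2 * S.card) < (e+1) * (e+1)^2 := Nat.mul_lt_mul_of_pos_left h1 (by omega)
    have h4 : (e+1) * (e+1)^2 = (e+1)^3 := by ring
    omega
  · nlinarith
  · by_contra h
    push Not at h
    nlinarith
  · omega
  · omega
  · intro b hb b1 hb1 h
    exact (Finset.card_le_card (Finset.filter_subset_filter _ hB')).trans (hD b (hB' hb) b1 (hB' hb1) h)

end EI


namespace EI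

section rich

variable {p : ℕ} [Fact p.Prime]

lemma theta_indep {a b c : ZMod p}
    (h : algebraMap (ZMod p) (RatFunc (ZMod p)) a + algebraMap (ZMod p) (RatFunc (ZMod p)) b * RatFunc.X
      + algebraMap (ZMod p) (RatFunc (ZMod p)) c * RatFunc.X ^ 2 = 0) : a = 0 ∧ b = 0 ∧ c = 0 := by
  have h1 : algebraMap (Polynomial (ZMod p)) (RatFunc (ZMod p))
      (Polynomial.C a + Polynomial.C b * Polynomial.X + Polynomial.C c * Polynomial.X ^ 2) = 0 := by
    rw [← h]
    simp [RatFunc.algebraMap_C, RatFunc.algebraMap_eq_C]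
  rw [map_eq_zero_iff _ (IsFractionRing.injective (Polynomial (ZMod p)) (RatFunc (ZMod p)))] at h1
  have c0 := congrArg (fun q => q.coeff 0) h1
  have c1 := congrArg (fun q => q.coeff 1) h1
  have c2 := congrArg (fun q => q.coeff 2) h1
  simp [Polynomial.coeff_X, Polynomial.coeff_C, Polynomial.coeff_X_pow] at c0 c1 c2
  exact ⟨c0, c1, c2⟩

instance ratfuncInfinite : Infinite (RatFunc (ZMod p)) :=
  Infinite.of_injective _ (IsFractionRing.injective (Polynomial (ZMod p)) (RatFunc (ZMod p)))

lemma ratfuncCharP : CharP (RatFunc (ZMod p)) p :=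
  charP_of_injective_algebraMap (algebraMap (ZMod p) (RatFunc (ZMod p))).injective p


noncomputable def redOf (x : ZMod p × ZMod p × ZMod p) : RatFunc (ZMod p) × RatFunc (ZMod p) × RatFunc (ZMod p) :=
  (algebraMap (ZMod p) (RatFunc (ZMod p)) x.2.1, algebraMap (ZMod p) (RatFunc (ZMod p)) x.1, algebraMap (ZMod p) (RatFunc (ZMod p)) x.2.2 + algebraMap (ZMod p) (RatFunc (ZMod p)) x.1 * RatFunc.X + algebraMap (ZMod p) (RatFunc (ZMod p)) x.2.1 * RatFunc.X ^ 2)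

noncomputable def blueOf (y : ZMod p × ZMod p × ZMod p) : RatFunc (ZMod p) × RatFunc (ZMod p) × RatFunc (ZMod p) :=
  ((algebraMap (ZMod p) (RatFunc (ZMod p)) y.1 - RatFunc.X ^ 2) / (algebraMap (ZMod p) (RatFunc (ZMod p)) y.2.1 + RatFunc.X), - 1 / (algebraMap (ZMod p) (RatFunc (ZMod p)) y.2.1 + RatFunc.X),
    algebraMap (ZMod p) (RatFunc (ZMod p)) y.2.2 / (algebraMap (ZMod p) (RatFunc (ZMod p)) y.2.1 + RatFunc.X))

lemma V_ne (m : ZMod p) : algebraMap (ZMod p) (RatFunc (ZMod p)) m + RatFunc.X ≠ 0 := by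
  intro h
  have := theta_indep (p := p) (a := m) (b := 1) (c := 0) (by simpa using h)
  exact one_ne_zero this.2.1

lemma inc_iff (x y : ZMod p × ZMod p × ZMod p) :
    Inc (redOf x) (blueOf y) ↔ y.2.1 * x.1 + y.2.2 = x.2.1 * y.1 + x.2.2 := by
  have hV := V_ne y.2.1
  unfold Inc redOf blueOf
  dsimp only
  rw [← (algebraMap (ZMod p) (RatFunc (ZMod p))).injective.eq_iff]
  simp only [map_add, map_mul]
  constructor
  · intro h
    field_simp at h
    linear_combination - h
  · intro h
    field_simp
    linear_combination - h

lemma red_w_inj {x y : ZMod p × ZMod p × ZMod p} (h : (redOf x).2.2 = (redOf y).2.2) : x = y := by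
  unfold redOf at h
  dsimp only at h
  have := theta_indep (p := p) (a := x.2.2 - y.2.2) (b := x.1 - y.1) (c := x.2.1 - y.2.1) (by
    simp only [map_sub]; linear_combination h)
  obtain ⟨h1, h2, h3⟩ := this
  ext
  · exact sub_eq_zero.1 h2
  · exact sub_eq_zero.1 h3
  · exact sub_eq_zero.1 h1

lemma blue_beta {x y : ZMod p × ZMod p × ZMod p} (h : (blueOf x).1 = (blueOf y).1) :
    x.1 = y.1 ∧ x.2.1 = y.2.1 := by
  unfold blueOf at h
  dsimp only at h
  rw [div_eq_div_iff (V_ne _) (V_ne _)] at h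
  have := theta_indep (p := p) (a := x.1 * y.2.1 - y.1 * x.2.1) (b := x.1 - y.1) (c := x.2.1 - y.2.1) (by
    simp only [map_sub, map_mul]; linear_combination h)
  exact ⟨sub_eq_zero.1 this.2.1, sub_eq_zero.1 this.2.2⟩

lemma blue_inj {x y : ZMod p × ZMod p × ZMod p} (h : blueOf x = blueOf y) : x = y := by
  have h1 := blue_beta (congrArg (fun z => z.1) h)
  have h2 := congrArg (fun z => z.2.2) h
  unfold blueOf at h2
  dsimp only at h2
  rw [h1.2, div_left_inj' (V_ne _)] at h2
  ext
  · exact h1.1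
  · exact h1.2
  · exact (algebraMap (ZMod p) (RatFunc (ZMod p))).injective h2

lemma blue_collinear (x y z : ZMod p × ZMod p × ZMod p)
    (h1 : ((blueOf y).1 - (blueOf x).1) * ((blueOf z).2.1 - (blueOf x).2.1) =
      ((blueOf z).1 - (blueOf x).1) * ((blueOf y).2.1 - (blueOf x).2.1))
    (h2 : ((blueOf y).1 - (blueOf x).1) * ((blueOf z).2.2 - (blueOf x).2.2) =
      ((blueOf z).1 - (blueOf x).1) * ((blueOf y).2.2 - (blueOf x).2.2)) :
    (y.1 - x.1) * (z.2.1 - x.2.1) = (z.1 - x.1) * (y.2.1 - x.2.1) ∧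
    (y.1 - x.1) * (z.2.2 - x.2.2) = (z.1 - x.1) * (y.2.2 - x.2.2) ∧
    (y.2.1 - x.2.1) * (z.2.2 - x.2.2) = (z.2.1 - x.2.1) * (y.2.2 - x.2.2) := by
  have hx := V_ne x.2.1
  have hy := V_ne y.2.1
  have hz := V_ne z.2.1
  have e1 : (algebraMap (ZMod p) (RatFunc (ZMod p)) y.1 - algebraMap (ZMod p) (RatFunc (ZMod p)) x.1) * (algebraMap (ZMod p) (RatFunc (ZMod p)) z.2.1 - algebraMap (ZMod p) (RatFunc (ZMod p)) x.2.1) = (algebraMap (ZMod p) (RatFunc (ZMod p)) z.1 - algebraMap (ZMod p) (RatFunc (ZMod p)) x.1) * (algebraMap (ZMod p) (RatFunc (ZMod p)) y.2.1 - algebraMap (ZMod p) (RatFunc (ZMod p)) x.2.1) := by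
    unfold blueOf at h1
    dsimp only at h1
    field_simp at h1
    apply mul_left_cancel₀ hx
    linear_combination h1
  have e2 : (algebraMap (ZMod p) (RatFunc (ZMod p)) x.2.1 + RatFunc.X) * ((algebraMap (ZMod p) (RatFunc (ZMod p)) y.1 - algebraMap (ZMod p) (RatFunc (ZMod p)) x.1) * (algebraMap (ZMod p) (RatFunc (ZMod p)) z.2.2 - algebraMap (ZMod p) (RatFunc (ZMod p)) x.2.2) - (algebraMap (ZMod p) (RatFunc (ZMod p)) z.1 - algebraMap (ZMod p) (RatFunc (ZMod p)) x.1) * (algebraMap (ZMod p) (RatFunc (ZMod p)) y.2.2 - algebraMap (ZMod p) (RatFunc (ZMod p)) x.2.2))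
     = (algebraMap (ZMod p) (RatFunc (ZMod p)) x.1 - RatFunc.X ^ 2) * ((algebraMap (ZMod p) (RatFunc (ZMod p)) y.2.1 - algebraMap (ZMod p) (RatFunc (ZMod p)) x.2.1) * (algebraMap (ZMod p) (RatFunc (ZMod p)) z.2.2 - algebraMap (ZMod p) (RatFunc (ZMod p)) x.2.2) - (algebraMap (ZMod p) (RatFunc (ZMod p)) z.2.1 - algebraMap (ZMod p) (RatFunc (ZMod p)) x.2.1) * (algebraMap (ZMod p) (RatFunc (ZMod p)) y.2.2 - algebraMap (ZMod p) (RatFunc (ZMod p)) x.2.2)) := by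
    unfold blueOf at h2
    dsimp only at h2
    field_simp at h2
    apply mul_left_cancel₀ hx
    linear_combination h2 + (algebraMap (ZMod p) (RatFunc (ZMod p)) x.2.1 + RatFunc.X) * algebraMap (ZMod p) (RatFunc (ZMod p)) x.2.2 * e1
  set α := (y.1 - x.1) * (z.2.2 - x.2.2) - (z.1 - x.1) * (y.2.2 - x.2.2) with hα
  set γ := (y.2.1 - x.2.1) * (z.2.2 - x.2.2) - (z.2.1 - x.2.1) * (y.2.2 - x.2.2) with hγ
  have hiota : algebraMap (ZMod p) (RatFunc (ZMod p)) α = (algebraMap (ZMod p) (RatFunc (ZMod p)) y.1 - algebraMap (ZMod p) (RatFunc (ZMod p)) x.1) * (algebraMap (ZMod p) (RatFunc (ZMod p)) z.2.2 - algebraMap (ZMod p) (RatFunc (ZMod p)) x.2.2) - (algebraMap (ZMod p) (RatFunc (ZMod p)) z.1 - algebraMap (ZMod p) (RatFunc (ZMod p)) x.1) * (algebraMap (ZMod p) (RatFunc (ZMod p)) y.2.2 - algebraMap (ZMod p) (RatFunc (ZMod p)) x.2.2) := by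
    simp [hα]
  have hiota' : algebraMap (ZMod p) (RatFunc (ZMod p)) γ = (algebraMap (ZMod p) (RatFunc (ZMod p)) y.2.1 - algebraMap (ZMod p) (RatFunc (ZMod p)) x.2.1) * (algebraMap (ZMod p) (RatFunc (ZMod p)) z.2.2 - algebraMap (ZMod p) (RatFunc (ZMod p)) x.2.2) - (algebraMap (ZMod p) (RatFunc (ZMod p)) z.2.1 - algebraMap (ZMod p) (RatFunc (ZMod p)) x.2.1) * (algebraMap (ZMod p) (RatFunc (ZMod p)) y.2.2 - algebraMap (ZMod p) (RatFunc (ZMod p)) x.2.2) := by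
    simp [hγ]
  have h3 := theta_indep (p := p) (a := x.2.1 * α - x.1 * γ) (b := α) (c := γ) (by
    simp only [map_sub, map_mul]
    rw [hiota, hiota']
    linear_combination e2)
  refine ⟨?_, sub_eq_zero.1 h3.2.1, sub_eq_zero.1 h3.2.2⟩
  apply (algebraMap (ZMod p) (RatFunc (ZMod p))).injective
  simpa using e1

end rich
end EI


namespace EI

section rich

variable {p : ℕ} [Fact p.Prime]

open Classical in
/-- at most `|A|²/(k-1)` rich lines through one point -/
lemma concurrent (A : Finset (ZMod p)) (L : Finset (ZMod p × ZMod p)) (k : ℕ)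
    (hL : ∀ l ∈ L, k ≤ (A.filter (fun a => l.1 * a + l.2 ∈ A)).card) (x0 y0 : ZMod p) :
    (L.filter (fun l => l.1 * x0 + l.2 = y0)).card * (k - 1) ≤ A.card ^ 2 := by
  set M := L.filter (fun l => l.1 * x0 + l.2 = y0) with hM
  have h1 : ∀ l ∈ M, k - 1 ≤ ((A.erase x0).filter (fun a => l.1 * a + l.2 ∈ A)).card := by
    intro l hl
    have h2 := hL l (Finset.mem_filter.1 hl).1
    have h3 := Finset.pred_card_le_card_erase (s := A.filter (fun a => l.1 * a + l.2 ∈ A)) (a := x0)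
    rw [← Finset.filter_erase] at h3
    omega
  calc M.card * (k - 1) = ∑ l ∈ M, (k - 1) := by simp
    _ ≤ ∑ l ∈ M, ((A.erase x0).filter (fun a => l.1 * a + l.2 ∈ A)).card := Finset.sum_le_sum h1
    _ = (M.sigma (fun l => (A.erase x0).filter (fun a => l.1 * a + l.2 ∈ A))).card := by
      rw [Finset.card_sigma]
    _ ≤ (A ×ˢ A).card := by
      apply Finset.card_le_card_of_injOn (fun q => (q.2, q.1.1 * q.2 + q.1.2))
      · rintro ⟨l, a⟩ h
        simp only [Finset.coe_sigma, Set.mem_sigma_iff, Finset.mem_coe, Finset.mem_filter, Finset.mem_erase] at h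
        simp only [Finset.coe_product, Set.mem_prod, Finset.mem_coe]
        exact ⟨h.2.1.2, h.2.2⟩
      · rintro ⟨⟨m, c⟩, a⟩ h ⟨⟨m', c'⟩, a'⟩ h' heq
        simp only [Finset.coe_sigma, Set.mem_sigma_iff, Finset.mem_coe, Finset.mem_filter,
          Finset.mem_erase, hM] at h h'
        simp only [Prod.mk.injEq] at heq
        obtain ⟨rfl, heq⟩ := heq
        have e1 := h.1.2
        have e2 := h'.1.2
        have hne : a - x0 ≠ 0 := sub_ne_zero.2 h.2.1.1
        have hm : m = m' := by
          apply mul_right_cancel₀ hne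
          linear_combination heq - e1 + e2
        subst hm
        have hc : c = c' := by linear_combination heq
        subst hc
        rfl
    _ = A.card ^ 2 := by rw [Finset.card_product, sq]

open Classical in
lemma rich_pp (A : Finset (ZMod p)) (L : Finset (ZMod p × ZMod p)) (k s D q : ℕ) (hk : 2 ≤ k)
    (hL : ∀ l ∈ L, k ≤ (A.filter (fun a => l.1 * a + l.2 ∈ A)).card)
    (hq : 1 ≤ q) (hq2 : A.card * L.card ≤ q ^ 2) (hp2 : A.card * L.card ≤ p ^ 2)
    (hs : 12000 * q ≤ s) (hsD : 2 * D ≤ s) (hD1 : A.card ≤ D) (hD2 : A.card ^ 2 ≤ D * (k - 1)) :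
    ∑ x ∈ A ×ˢ L, ((A ×ˢ L).filter (fun y => y.2.1 * x.1 + y.2.2 = x.2.1 * y.1 + x.2.2)).card
      ≤ s * (2 * (A.card * L.card)) := by
  haveI : CharP (RatFunc (ZMod p)) p := ratfuncCharP
  have hri : Function.Injective (redOf (p := p)) := fun x y h =>
    red_w_inj (congrArg (fun z => z.2.2) h)
  have hbi : Function.Injective (blueOf (p := p)) := fun x y h => blue_inj h
  have hcr : ((A ×ˢ L).image redOf).card = A.card * L.card := by
    rw [Finset.card_image_of_injective _ hri, Finset.card_product]
  have hcb : ((A ×ˢ L).image blueOf).card = A.card * L.card := by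
    rw [Finset.card_image_of_injective _ hbi, Finset.card_product]
  have main := pointplane p ((A ×ˢ L).image redOf) ((A ×ˢ L).image blueOf) s D q ?_ ?_ hq
    (by rw [hcr]; exact hq2) (by rw [hcb]; exact hq2) (by rw [hcr]; exact hp2) hs hsD ?_
  · rw [Finset.sum_image (fun x _ y _ h => hri h), hcr, hcb] at main
    refine le_trans (le_of_eq ?_) (main.trans (by rw [two_mul]))
    refine Finset.sum_congr rfl fun x _ => ?_
    rw [Finset.filter_image, Finset.card_image_of_injective _ hbi]
    congr 1
    apply Finset.filter_congr
    intro y _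
    exact (inc_iff x y).symm
  · intro r hr r' hr' h
    simp only [Finset.coe_image, Set.mem_image] at hr hr'
    obtain ⟨x, _, rfl⟩ := hr
    obtain ⟨x', _, rfl⟩ := hr'
    rw [red_w_inj h]
  · intro r hr b hb b' hb' h
    obtain ⟨x, _, rfl⟩ := Finset.mem_image.1 hr
    obtain ⟨hb1, hb2⟩ := hb
    obtain ⟨hb1', hb2'⟩ := hb'
    obtain ⟨y, _, rfl⟩ := Finset.mem_image.1 hb1
    obtain ⟨y', _, rfl⟩ := Finset.mem_image.1 hb1'
    rw [inc_iff] at hb2 hb2'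
    obtain ⟨e1, e2⟩ := blue_beta h
    congr 1
    ext
    · exact e1
    · exact e2
    · rw [← e1, ← e2] at hb2'
      linear_combination hb2 - hb2'
  · intro b hb b1 hb1 hne
    obtain ⟨x, hx, rfl⟩ := Finset.mem_image.1 hb
    obtain ⟨y, hy, rfl⟩ := Finset.mem_image.1 hb1
    rw [Finset.filter_image, Finset.card_image_of_injective _ hbi]
    have hsub : ((A ×ˢ L).filter (fun z =>
        ((blueOf y).1 - (blueOf x).1) * ((blueOf z).2.1 - (blueOf x).2.1) =
          ((blueOf z).1 - (blueOf x).1) * ((blueOf y).2.1 - (blueOf x).2.1) ∧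
        ((blueOf y).1 - (blueOf x).1) * ((blueOf z).2.2 - (blueOf x).2.2) =
          ((blueOf z).1 - (blueOf x).1) * ((blueOf y).2.2 - (blueOf x).2.2))) ⊆
      ((A ×ˢ L).filter (fun z =>
      (y.1 - x.1) * (z.2.1 - x.2.1) = (z.1 - x.1) * (y.2.1 - x.2.1) ∧
      (y.1 - x.1) * (z.2.2 - x.2.2) = (z.1 - x.1) * (y.2.2 - x.2.2) ∧
      (y.2.1 - x.2.1) * (z.2.2 - x.2.2) = (z.2.1 - x.2.1) * (y.2.2 - x.2.2))) := by
      intro z hz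
      rw [Finset.mem_filter] at hz ⊢
      exact ⟨hz.1, blue_collinear x y z hz.2.1 hz.2.2⟩
    refine (Finset.card_le_card hsub).trans ?_
    by_cases h1 : y.1 - x.1 = 0
    · have h2 : y.2.1 - x.2.1 ≠ 0 := by
        intro h2
        apply hne
        unfold blueOf
        rw [sub_eq_zero.1 h1, sub_eq_zero.1 h2]
      set x0 := - (y.2.2 - x.2.2) / (y.2.1 - x.2.1) with hx0
      have hx0' : (y.2.1 - x.2.1) * x0 = - (y.2.2 - x.2.2) := by
        rw [hx0]; field_simp
      have hcc := concurrent A L k hL x0 (x.2.1 * x0 + x.2.2)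
      refine (Finset.card_le_card_of_injOn (fun z => z.2) (t := L.filter (fun l => l.1 * x0 + l.2 = (x.2.1 * x0 + x.2.2))) ?_ ?_).trans ?_
      · intro z hz
        simp only [Finset.coe_filter, Set.mem_setOf_eq, Finset.mem_product] at hz ⊢
        refine ⟨hz.1.2, ?_⟩
        apply mul_left_cancel₀ h2
        linear_combination hz.2.2.2 + (z.2.1 - x.2.1) * hx0'
      · intro z hz z' hz' h
        simp only [Finset.coe_filter, Set.mem_setOf_eq, Finset.mem_product, h1, zero_mul] at hz hz'
        have e1 := sub_eq_zero.1 ((mul_eq_zero.1 hz.2.1.symm).resolve_right h2)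
        have e2 := sub_eq_zero.1 ((mul_eq_zero.1 hz'.2.1.symm).resolve_right h2)
        exact Prod.ext (e1.trans e2.symm) h
      · exact Nat.le_of_mul_le_mul_right (hcc.trans hD2) (by omega)
    · refine (Finset.card_le_card_of_injOn (fun z => z.1) (t := A) ?_ ?_).trans hD1
      · intro z hz
        simp only [Finset.coe_filter, Set.mem_setOf_eq, Finset.mem_product] at hz
        exact hz.1.1
      · intro z hz z' hz' h
        simp only [Finset.coe_filter, Set.mem_setOf_eq, Finset.mem_product] at hz hz'
        have h' : z.1 = z'.1 := h
        ext
        · exact h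
        · apply sub_left_injective (b := x.2.1)
          apply mul_left_cancel₀ h1
          show (y.1 - x.1) * (z.2.1 - x.2.1) = (y.1 - x.1) * (z'.2.1 - x.2.1)
          rw [hz.2.1, hz'.2.1, h']
        · apply sub_left_injective (b := x.2.2)
          apply mul_left_cancel₀ h1
          show (y.1 - x.1) * (z.2.2 - x.2.2) = (y.1 - x.1) * (z'.2.2 - x.2.2)
          rw [hz.2.2.1, hz'.2.2.1, h']

open Classical in
lemma rich_cs (A : Finset (ZMod p)) (L : Finset (ZMod p × ZMod p)) (k : ℕ)
    (hL : ∀ l ∈ L, k ≤ (A.filter (fun a => l.1 * a + l.2 ∈ A)).card) :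
    (k * L.card) ^ 2 ≤ A.card * ∑ x ∈ A ×ˢ L,
      ((A ×ˢ L).filter (fun y => y.2.1 * x.1 + y.2.2 = x.2.1 * y.1 + x.2.2)).card := by
  -- swap the two lines
  have hswap : ∑ x ∈ A ×ˢ L,
      ((A ×ˢ L).filter (fun y => y.2.1 * x.1 + y.2.2 = x.2.1 * y.1 + x.2.2)).card =
      ∑ x ∈ A ×ˢ L,
      ((A ×ˢ L).filter (fun y => y.2.1 * y.1 + y.2.2 = x.2.1 * x.1 + x.2.2)).card := by
    simp only [Finset.card_filter, Finset.sum_product]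
    refine Finset.sum_congr rfl fun a _ => ?_
    rw [Finset.sum_comm]
    rw [Finset.sum_comm (s := L) (t := A)]
    refine Finset.sum_congr rfl fun a' _ => ?_
    rw [Finset.sum_comm]
    refine Finset.sum_congr rfl fun l _ => Finset.sum_congr rfl fun l' _ => ?_
    simp only [eq_comm]
  rw [hswap]
  set n : ZMod p → ℕ := fun y => ((A ×ˢ L).filter (fun x => x.2.1 * x.1 + x.2.2 = y)).card with hn
  have h1 : k * L.card ≤ ∑ y ∈ A, n y := by
    calc k * L.card = ∑ l ∈ L, k := by simp [mul_comm]
      _ ≤ ∑ l ∈ L, (A.filter (fun a => l.1 * a + l.2 ∈ A)).card := Finset.sum_le_sum hL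
      _ = ∑ y ∈ A, n y := by
        simp only [hn, Finset.card_filter, Finset.sum_product]
        rw [Finset.sum_comm]
        rw [Finset.sum_comm (s := A) (t := A)]
        refine Finset.sum_congr rfl fun a _ => ?_
        rw [Finset.sum_comm]
        refine Finset.sum_congr rfl fun l _ => ?_
        simp
  have h2 : (∑ y ∈ A, n y) ^ 2 ≤ A.card * ∑ y ∈ A, n y ^ 2 := sq_sum_le_card_mul_sum_sq
  have h3 : ∑ y ∈ A, n y ^ 2 ≤ ∑ x ∈ A ×ˢ L, n (x.2.1 * x.1 + x.2.2) := by
    have h4 : ∀ y ∈ A, n y ^ 2 = ∑ x ∈ (A ×ˢ L).filter (fun x => x.2.1 * x.1 + x.2.2 = y), n (x.2.1 * x.1 + x.2.2) := by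
      intro y _
      rw [Finset.sum_congr rfl (g := fun _ => n y) (by
        intro x hx
        rw [(Finset.mem_filter.1 hx).2]), Finset.sum_const, smul_eq_mul, sq]
    rw [Finset.sum_congr rfl h4]
    rw [Finset.sum_fiberwise_eq_sum_filter (A ×ˢ L) A (fun x => x.2.1 * x.1 + x.2.2) (fun x => n (x.2.1 * x.1 + x.2.2))]
    exact Finset.sum_le_sum_of_subset (Finset.filter_subset _ _)
  calc (k * L.card) ^ 2 ≤ (∑ y ∈ A, n y) ^ 2 := Nat.pow_le_pow_left h1 2
    _ ≤ _ := h2.trans (Nat.mul_le_mul_left _ h3)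

end rich
end EI


namespace EI

section rich

variable {p : ℕ} [Fact p.Prime]

open Classical in
lemma rich1 (A : Finset (ZMod p)) (L : Finset (ZMod p × ZMod p)) (k : ℕ) (hk : 2 ≤ k)
    (hL : ∀ l ∈ L, k ≤ (A.filter (fun a => l.1 * a + l.2 ∈ A)).card)
    (hp2 : A.card * L.card ≤ p ^ 2) : L.card * k ^ 4 ≤ 10 ^ 10 * A.card ^ 5 := by
  rcases L.eq_empty_or_nonempty with rfl | ⟨l0, hl0⟩
  · simp
  have hkn : k ≤ A.card := (hL l0 hl0).trans (Finset.card_le_card (Finset.filter_subset _ _))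
  have hN : 1 ≤ L.card := Finset.card_pos.2 ⟨l0, hl0⟩
  set n := A.card with hn
  set N := L.card with hNN
  set q := Nat.sqrt (n * N) + 1 with hq
  have hnN : 1 ≤ n * N := Nat.mul_pos (by omega) hN
  have hq1 : n * N ≤ q ^ 2 := (Nat.lt_succ_sqrt' _).le
  have hq2 : q ^ 2 ≤ 4 * (n * N) := by
    have h1 : Nat.sqrt (n*N) ^ 2 ≤ n * N := Nat.sqrt_le' _
    have h2 : 1 ≤ Nat.sqrt (n * N) := Nat.sqrt_pos.2 hnN
    rw [hq]
    nlinarith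
  set D := n ^ 2 / (k - 1) + 1 with hD
  have hkk : 0 < k - 1 := by omega
  have hDn : n ≤ D := by
    have : n ≤ n ^ 2 / (k - 1) := by
      rw [Nat.le_div_iff_mul_le hkk, sq]
      exact Nat.mul_le_mul_left _ (by omega)
    omega
  have hD2 : n ^ 2 ≤ D * (k - 1) := by
    rw [hD, add_mul, one_mul]
    exact (Nat.lt_div_mul_add hkk).le
  have hD3 : k * D ≤ 4 * n ^ 2 := by
    have h1 : n ^ 2 / (k - 1) * (k - 1) ≤ n ^ 2 := Nat.div_mul_le_self _ _
    have h2 : D * (k - 1) ≤ n ^ 2 + (k - 1) := by rw [hD, add_mul, one_mul]; omega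
    have h3 : k * D ≤ 2 * (D * (k - 1)) := by
      have : k ≤ 2 * (k - 1) := by omega
      calc k * D ≤ 2 * (k - 1) * D := Nat.mul_le_mul_right _ this
        _ = _ := by ring
    have h4 : k - 1 ≤ n ^ 2 := by
      have : n ≤ n ^ 2 := Nat.le_self_pow (by norm_num) n
      omega
    omega
  have h1 := rich_pp A L k (12000 * q + 2 * D) D q hk hL (by omega) hq1 hp2 (by omega) (by omega) hDn hD2
  have h2 := (rich_cs A L k hL).trans (Nat.mul_le_mul_left _ h1)
  rw [← hn, ← hNN] at h2
  have h3 : k ^ 2 * N ≤ 24000 * n ^ 2 * q + 4 * n ^ 2 * D := by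
    apply Nat.le_of_mul_le_mul_right _ hN
    calc k ^ 2 * N * N = (k * N) ^ 2 := by ring
      _ ≤ _ := h2
      _ = _ := by ring
  clear_value D q
  by_cases hc : 4 * n ^ 2 * D ≤ 24000 * n ^ 2 * q
  · have h4 : k ^ 2 * N ≤ 48000 * n ^ 2 * q := by nlinarith
    have h5 : (k ^ 2 * N) ^ 2 ≤ (48000 * n ^ 2 * q) ^ 2 := Nat.pow_le_pow_left h4 2
    have h6 : (48000 * n ^ 2 * q) ^ 2 ≤ 48000 ^ 2 * n ^ 4 * (4 * (n * N)) := by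
      calc (48000 * n ^ 2 * q) ^ 2 = 48000 ^ 2 * n ^ 4 * q ^ 2 := by ring
        _ ≤ _ := Nat.mul_le_mul_left _ hq2
    have h7 : N * k ^ 4 ≤ 96000 ^ 2 * n ^ 5 := by
      apply Nat.le_of_mul_le_mul_right _ hN
      calc N * k ^ 4 * N = (k ^ 2 * N) ^ 2 := by ring
        _ ≤ _ := h5.trans h6
        _ = _ := by ring
    exact h7.trans (Nat.mul_le_mul_right _ (by norm_num))
  · have h4 : k ^ 2 * N ≤ 8 * n ^ 2 * D := by nlinarith
    calc N * k ^ 4 = (k ^ 2 * N) * k * k := by ring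
      _ ≤ (8 * n ^ 2 * D) * k * n := by gcongr
      _ = 8 * n ^ 3 * (k * D) := by ring
      _ ≤ 8 * n ^ 3 * (4 * n ^ 2) := Nat.mul_le_mul_left _ hD3
      _ = 32 * n ^ 5 := by ring
      _ ≤ _ := Nat.mul_le_mul_right _ (by norm_num)

open Classical in
/-- number of points of `A` mapped into `A` by the line -/
noncomputable def ii (A : Finset (ZMod p)) (l : ZMod p × ZMod p) : ℕ :=
  (A.filter (fun a => l.1 * a + l.2 ∈ A)).card

open Classical in
lemma count_one (A : Finset (ZMod p)) (a : ZMod p) :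
    ((Finset.univ : Finset (ZMod p × ZMod p)).filter (fun l => l.1 * a + l.2 ∈ A)).card = p * A.card := by
  have : ((Finset.univ : Finset (ZMod p × ZMod p)).filter (fun l => l.1 * a + l.2 ∈ A)).card
      = ((Finset.univ : Finset (ZMod p)) ×ˢ A).card := by
    apply Finset.card_bij (fun l _ => (l.1, l.1 * a + l.2))
    · intro l hl
      simpa using hl
    · rintro ⟨m, c⟩ _ ⟨m', c'⟩ _ h
      simp only [Prod.mk.injEq] at h
      obtain ⟨rfl, h⟩ := h
      simpa using h
    · rintro ⟨m, y⟩ h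
      refine ⟨(m, y - m * a), ?_, ?_⟩
      · simpa using h
      · simp
  rw [this, Finset.card_product, Finset.card_univ, ZMod.card]

open Classical in
lemma count_two (A : Finset (ZMod p)) (a b : ZMod p) (hab : a ≠ b) :
    ((Finset.univ : Finset (ZMod p × ZMod p)).filter
      (fun l => l.1 * a + l.2 ∈ A ∧ l.1 * b + l.2 ∈ A)).card ≤ A.card ^ 2 := by
  rw [sq, ← Finset.card_product]
  apply Finset.card_le_card_of_injOn (fun l => (l.1 * a + l.2, l.1 * b + l.2))
  · intro l hl
    simpa using hl
  · rintro ⟨m, c⟩ _ ⟨m', c'⟩ _ h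
    simp only [Prod.mk.injEq] at h
    have hne : a - b ≠ 0 := sub_ne_zero.2 hab
    have hm : m = m' := by
      apply mul_right_cancel₀ hne
      linear_combination h.1 - h.2
    subst hm
    have hc : c = c' := by linear_combination h.1
    rw [hc]

lemma sum_ii (A : Finset (ZMod p)) : ∑ l : ZMod p × ZMod p, ii A l = p * A.card ^ 2 := by
  classical
  unfold ii
  simp only [Finset.card_filter]
  rw [Finset.sum_comm]
  rw [Finset.sum_congr rfl (g := fun _ => p * A.card) (by
    intro a _
    rw [← Finset.card_filter]
    convert count_one A a)]
  simp; ring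

lemma sum_ii_sq (A : Finset (ZMod p)) :
    ∑ l : ZMod p × ZMod p, ii A l ^ 2 ≤ p * A.card ^ 2 + A.card ^ 4 := by
  classical
  have h1 : ∀ l : ZMod p × ZMod p, ii A l ^ 2 = ∑ a ∈ A, ∑ b ∈ A,
      if (l.1 * a + l.2 ∈ A ∧ l.1 * b + l.2 ∈ A) then 1 else 0 := by
    intro l
    unfold ii
    rw [sq, Finset.card_filter, Finset.sum_mul_sum]
    refine Finset.sum_congr rfl fun a _ => Finset.sum_congr rfl fun b _ => ?_
    split_ifs <;> simp_all
  rw [Finset.sum_congr rfl (fun l _ => h1 l), Finset.sum_comm]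
  have h2 : ∀ a ∈ A, ∑ l : ZMod p × ZMod p, ∑ b ∈ A,
      (if (l.1 * a + l.2 ∈ A ∧ l.1 * b + l.2 ∈ A) then 1 else 0) ≤ p * A.card + A.card ^ 3 := by
    intro a ha
    rw [Finset.sum_comm]
    have h3 : ∀ b ∈ A, ∑ l : ZMod p × ZMod p,
      (if (l.1 * a + l.2 ∈ A ∧ l.1 * b + l.2 ∈ A) then 1 else 0) ≤
        (if a = b then p * A.card else 0) + A.card ^ 2 := by
      intro b _
      rw [← Finset.card_filter]
      split_ifs with hab
      · subst hab
        simp only [and_self]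
        have := count_one A a
        refine le_trans (le_of_eq ?_) (Nat.le_add_right _ _)
        convert this
      · rw [zero_add]
        convert count_two A a b hab
    refine (Finset.sum_le_sum h3).trans ?_
    rw [Finset.sum_add_distrib, Finset.sum_ite_eq, if_pos ha, Finset.sum_const, smul_eq_mul]
    apply le_of_eq; ring
  refine (Finset.sum_le_sum h2).trans ?_
  rw [Finset.sum_const, smul_eq_mul]
  apply le_of_eq; ring

lemma rich_var (A : Finset (ZMod p)) (L : Finset (ZMod p × ZMod p)) (k : ℕ)
    (hL : ∀ l ∈ L, k ≤ ii A l) (hkp : 2 * A.card ^ 2 ≤ k * p) :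
    L.card * k ^ 2 ≤ 4 * p * A.card ^ 2 := by
  have hp0 : (0:ℝ) < p := by exact_mod_cast (Fact.out : p.Prime).pos
  have h1 : ∑ l : ZMod p × ZMod p, ((p:ℝ) * ii A l - A.card ^ 2) ^ 2 ≤ (p:ℝ) ^ 3 * A.card ^ 2 := by
    have e1 : (∑ l : ZMod p × ZMod p, (ii A l : ℝ)) = p * A.card ^ 2 := by exact_mod_cast sum_ii A
    have e2 : (∑ l : ZMod p × ZMod p, (ii A l : ℝ) ^ 2) ≤ p * A.card ^ 2 + A.card ^ 4 := by
      exact_mod_cast sum_ii_sq A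
    have e3 : ∀ l : ZMod p × ZMod p, ((p:ℝ) * ii A l - A.card ^ 2) ^ 2 =
      (p:ℝ) ^ 2 * (ii A l : ℝ) ^ 2 - (2 * p * A.card ^ 2) * (ii A l : ℝ) + A.card ^ 4 := by
      intro l; ring
    rw [Finset.sum_congr rfl (fun l _ => e3 l), Finset.sum_add_distrib, Finset.sum_sub_distrib,
      ← Finset.mul_sum, ← Finset.mul_sum, e1, Finset.sum_const, Finset.card_univ, Fintype.card_prod,
      ZMod.card, nsmul_eq_mul]
    have := mul_le_mul_of_nonneg_left e2 (sq_nonneg (p:ℝ))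
    push_cast
    nlinarith
  have h2 : ∑ l ∈ L, ((p:ℝ) * k / 2) ^ 2 ≤ ∑ l : ZMod p × ZMod p, ((p:ℝ) * ii A l - A.card ^ 2) ^ 2 := by
    refine (Finset.sum_le_sum (g := fun l => ((p:ℝ) * ii A l - A.card ^ 2) ^ 2) ?_).trans
      (Finset.sum_le_sum_of_subset_of_nonneg (Finset.subset_univ L) (fun _ _ _ => sq_nonneg _))
    intro l hl
    have h3 : (k:ℝ) ≤ ii A l := by exact_mod_cast hL l hl
    have h4 : 2 * (A.card:ℝ) ^ 2 ≤ k * p := by exact_mod_cast hkp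
    have h5 := mul_le_mul_of_nonneg_left h3 hp0.le
    apply pow_le_pow_left₀ (by positivity)
    linarith
  rw [Finset.sum_const, nsmul_eq_mul] at h2
  have h3 := h2.trans h1
  have h4 : (L.card : ℝ) * k ^ 2 ≤ 4 * p * A.card ^ 2 := by
    have h5 : (p:ℝ)^2 * ((L.card : ℝ) * k ^ 2) ≤ (p:ℝ)^2 * (4 * p * A.card ^ 2) := by nlinarith
    exact le_of_mul_le_mul_left h5 (by positivity)
  exact_mod_cast h4

lemma rich (A : Finset (ZMod p)) (L : Finset (ZMod p × ZMod p)) (k : ℕ) (hk : 2 ≤ k)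
    (hL : ∀ l ∈ L, k ≤ ii A l) (hkp : 2 * A.card ^ 2 ≤ k * p) :
    L.card * k ^ 4 ≤ 10 ^ 10 * A.card ^ 5 := by
  classical
  by_contra hcon
  push Not at hcon
  have hne : L.Nonempty := by
    rw [Finset.nonempty_iff_ne_empty]; rintro rfl; simp at hcon
  obtain ⟨l0, hl0⟩ := hne
  have hkn : k ≤ A.card := (hL l0 hl0).trans (Finset.card_le_card (Finset.filter_subset _ _))
  have hvar := rich_var A L k hL hkp
  set n := A.card with hn
  have hk4 : 0 < k ^ 4 := by positivity
  set N := 10 ^ 10 * n ^ 5 / k ^ 4 + 1 with hN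
  have hN1 : 10 ^ 10 * n ^ 5 < N * k ^ 4 := by
    rw [hN, add_mul, one_mul]; exact Nat.lt_div_mul_add hk4
  have hN2 : N * k ^ 4 ≤ 2 * 10 ^ 10 * n ^ 5 := by
    have h1 := Nat.div_mul_le_self (10 ^ 10 * n ^ 5) (k ^ 4)
    have h2 : k ^ 4 ≤ n ^ 4 := Nat.pow_le_pow_left hkn 4
    have h3 : n ^ 4 ≤ n ^ 5 := Nat.pow_le_pow_right (by omega) (by norm_num)
    rw [hN, add_mul, one_mul]
    omega
  have hNL : N ≤ L.card := by
    rw [hN]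
    have := (Nat.div_lt_iff_lt_mul hk4).2 hcon
    omega
  obtain ⟨L', hL'L, hL'c⟩ := Finset.exists_subset_card_eq hNL
  have hbig : p ^ 2 < n * N := by
    by_contra h
    push Not at h
    have := rich1 A L' k hk (fun l hl => by simpa [ii] using hL l (hL'L hl)) (by rw [hL'c]; exact h)
    rw [hL'c, ← hn] at this
    omega
  -- k^4 p^2 ≤ 2·10^10 n^6
  have h6 : k ^ 4 * p ^ 2 ≤ 2 * 10 ^ 10 * n ^ 6 := by
    calc k ^ 4 * p ^ 2 ≤ k ^ 4 * (n * N) := Nat.mul_le_mul_left _ hbig.le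
      _ = n * (N * k ^ 4) := by ring
      _ ≤ n * (2 * 10 ^ 10 * n ^ 5) := Nat.mul_le_mul_left _ hN2
      _ = _ := by ring
  have h7 : k ^ 2 * p ≤ 10 ^ 6 * n ^ 3 := by
    by_contra h
    push Not at h
    have h8 := Nat.pow_lt_pow_left h (n := 2) (by norm_num)
    have h9 : (k ^ 2 * p) ^ 2 = k ^ 4 * p ^ 2 := by ring
    have h10 : (10 ^ 6 * n ^ 3) ^ 2 = 10 ^ 12 * n ^ 6 := by ring
    rw [h9, h10] at h8
    have : 2 * 10 ^ 10 * n ^ 6 ≤ 10 ^ 12 * n ^ 6 := Nat.mul_le_mul_right _ (by norm_num)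
    omega
  have h11 : L.card * k ^ 4 ≤ 4 * 10 ^ 6 * n ^ 5 := by
    calc L.card * k ^ 4 = L.card * k ^ 2 * k ^ 2 := by ring
      _ ≤ 4 * p * n ^ 2 * k ^ 2 := Nat.mul_le_mul_right _ hvar
      _ = 4 * n ^ 2 * (k ^ 2 * p) := by ring
      _ ≤ 4 * n ^ 2 * (10 ^ 6 * n ^ 3) := Nat.mul_le_mul_left _ h7
      _ = _ := by ring
  have : 4 * 10 ^ 6 * n ^ 5 ≤ 10 ^ 10 * n ^ 5 := Nat.mul_le_mul_right _ (by norm_num)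
  omega

end rich
end EI




namespace EI

section fin

variable {p : ℕ} [Fact p.Prime]

/-- the quotient of two lines -/
def gq (π : (ZMod p × ZMod p) × (ZMod p × ZMod p)) : ZMod p × ZMod p :=
  acomp p (ainv p π.1) π.2

lemma gq_iff (l1 l2 : ZMod p × ZMod p) (h : l1.1 ≠ 0) (a a' : ZMod p) :
    l1.1 * a' + l1.2 = l2.1 * a + l2.2 ↔ (gq (l1, l2)).1 * a + (gq (l1, l2)).2 = a' := by
  unfold gq acomp ainv
  dsimp only
  constructor
  · intro h1
    field_simp
    linear_combination - h1
  · intro h1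
    field_simp at h1
    linear_combination - h1

lemma sum_sq_fiber {α β : Type*} [DecidableEq β] (s : Finset α) (t : Finset β) (f : α → β) :
    ∑ y ∈ t, (s.filter (fun x => f x = y)).card ^ 2 ≤
      ∑ x ∈ s, (s.filter (fun x' => f x' = f x)).card := by
  set n : β → ℕ := fun y => (s.filter (fun x => f x = y)).card with hn
  have h4 : ∀ y ∈ t, n y ^ 2 = ∑ x ∈ s.filter (fun x => f x = y), n (f x) := by
    intro y _
    rw [Finset.sum_congr rfl (g := fun _ => n y) (by
      intro x hx
      rw [(Finset.mem_filter.1 hx).2]), Finset.sum_const, smul_eq_mul, sq]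
  change ∑ y ∈ t, n y ^ 2 ≤ ∑ x ∈ s, n (f x)
  rw [Finset.sum_congr rfl h4]
  rw [Finset.sum_fiberwise_eq_sum_filter s t f (fun x => n (f x))]
  exact Finset.sum_le_sum_of_subset (Finset.filter_subset _ _)

lemma inc_sq (A B : Finset (ZMod p)) (L : Finset (ZMod p × ZMod p)) (hL : ∀ l ∈ L, l.1 ≠ 0) :
    inc p A B L ^ 2 ≤ B.card * ∑ π ∈ L ×ˢ L, ii A (gq π) := by
  classical
  have h1 : inc p A B L ≤ ∑ b ∈ B, ((A ×ˢ L).filter (fun x => x.2.1 * x.1 + x.2.2 = b)).card := by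
    unfold inc
    rw [← Finset.card_sigma, Set.ncard_eq_toFinset_card']
    apply Finset.card_le_card_of_injOn (fun q => ⟨q.1.2, (q.1.1, q.2)⟩)
    · intro q hq
      simp only [Set.coe_toFinset, Set.mem_ofPred_eq] at hq
      simp only [Finset.coe_sigma, Set.mem_sigma_iff, Finset.mem_coe, Finset.mem_filter,
        Finset.mem_product]
      exact ⟨hq.2.1, ⟨hq.1, hq.2.2.1⟩, hq.2.2.2.symm⟩
    · rintro ⟨⟨a, b⟩, l⟩ _ ⟨⟨a', b'⟩, l'⟩ _ h
      simp only [Sigma.mk.injEq, heq_eq_eq, Prod.mk.injEq] at h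
      obtain ⟨rfl, rfl, rfl⟩ := h
      rfl
  have h2 := sq_sum_le_card_mul_sum_sq (s := B)
    (f := fun b => ((A ×ˢ L).filter (fun x => x.2.1 * x.1 + x.2.2 = b)).card)
  have h3 := sum_sq_fiber (A ×ˢ L) B (fun x => x.2.1 * x.1 + x.2.2)
  have h4 : ∑ x ∈ A ×ˢ L, ((A ×ˢ L).filter (fun x' => x'.2.1 * x'.1 + x'.2.2 = x.2.1 * x.1 + x.2.2)).card
      = ∑ π ∈ L ×ˢ L, ii A (gq π) := by
    simp only [ii, Finset.card_filter, Finset.sum_product]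
    rw [Finset.sum_comm]
    rw [Finset.sum_comm (s := L) (t := L)]
    refine Finset.sum_congr rfl fun l hl => ?_
    rw [Finset.sum_comm]
    rw [Finset.sum_congr rfl (g := fun a' => ∑ l1 ∈ L, ∑ a ∈ A, if l1.1 * a' + l1.2 = l.1 * a + l.2 then 1 else 0)
      (fun a' _ => Finset.sum_comm)]
    rw [Finset.sum_comm]
    refine Finset.sum_congr rfl fun l1 hl1 => ?_
    rw [Finset.sum_comm]
    refine Finset.sum_congr rfl fun a ha => ?_
    simp only [gq_iff l1 l (hL l1 hl1)]
    simp
  calc inc p A B L ^ 2 ≤ _ := Nat.pow_le_pow_left h1 2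
    _ ≤ _ := h2
    _ ≤ _ := Nat.mul_le_mul_left _ (h3.trans h4.le)

open Classical in
lemma energy_ge (L M : Finset (ZMod p × ZMod p)) :
    ∑ g ∈ M, ((L ×ˢ L).filter (fun π => gq π = g)).card ^ 2 ≤ affEnergy p L := by
  refine (sum_sq_fiber (L ×ˢ L) M gq).trans ?_
  unfold affEnergy
  rw [← Finset.card_sigma, Set.ncard_eq_toFinset_card']
  apply Finset.card_le_card_of_injOn (fun q => (q.2.1, q.2.2, q.1.1, q.1.2))
  · rintro ⟨⟨l1, l2⟩, ⟨l3, l4⟩⟩ h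
    simp only [Finset.coe_sigma, Set.mem_sigma_iff, Finset.mem_coe, Finset.mem_filter,
        Finset.mem_product] at h
    simp only [Set.coe_toFinset, Set.mem_ofPred_eq]
    exact ⟨h.2.1.1, h.2.1.2, h.1.1, h.1.2, h.2.2⟩
  · rintro ⟨⟨l1, l2⟩, ⟨l3, l4⟩⟩ _ ⟨⟨l1', l2'⟩, ⟨l3', l4'⟩⟩ _ h
    simp only [Prod.mk.injEq] at h
    obtain ⟨rfl, rfl, rfl, rfl⟩ := h
    rfl

open Classical in
lemma level (A : Finset (ZMod p)) (L : Finset (ZMod p × ZMod p)) (k : ℕ) (hk : 2 ≤ k)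
    (hkp : 2 * A.card ^ 2 ≤ k * p) :
    (((L ×ˢ L).filter (fun π => k ≤ ii A (gq π))).card * k ^ 2) ^ 2 ≤
      10 ^ 10 * A.card ^ 5 * affEnergy p L := by
  set M := (Finset.univ : Finset (ZMod p × ZMod p)).filter (fun g => k ≤ ii A g) with hM
  have h1 : ((L ×ˢ L).filter (fun π => k ≤ ii A (gq π))).card =
      ∑ g ∈ M, ((L ×ˢ L).filter (fun π => gq π = g)).card := by
    rw [Finset.card_eq_sum_card_fiberwise (f := gq) (t := M) (by
      intro π hπ
      simpa [hM] using (Finset.mem_filter.1 hπ).2)]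
    refine Finset.sum_congr rfl fun g hg => ?_
    rw [Finset.filter_filter]
    congr 1
    apply Finset.filter_congr
    intro π _
    constructor
    · exact fun h => h.2
    · intro h
      refine ⟨?_, h⟩
      rw [h]
      exact (Finset.mem_filter.1 hg).2
  have h2 := sq_sum_le_card_mul_sum_sq (s := M)
    (f := fun g => ((L ×ˢ L).filter (fun π => gq π = g)).card)
  have h3 := energy_ge L M
  have h4 := rich A M k hk (fun l hl => (Finset.mem_filter.1 hl).2) hkp
  rw [h1]
  calc _ = (∑ g ∈ M, ((L ×ˢ L).filter (fun π => gq π = g)).card) ^ 2 * k ^ 4 := by ring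
    _ ≤ (M.card * affEnergy p L) * k ^ 4 :=
      Nat.mul_le_mul_right _ (h2.trans (Nat.mul_le_mul_left _ h3))
    _ = (M.card * k ^ 4) * affEnergy p L := by ring
    _ ≤ _ := Nat.mul_le_mul_right _ h4

open Classical in
lemma layer (A : Finset (ZMod p)) (L : Finset (ZMod p × ZMod p)) (Δ : ℕ) :
    ∑ π ∈ L ×ˢ L, ii A (gq π) ≤ Δ * L.card ^ 2 +
      ∑ k ∈ Finset.Ioc Δ A.card, ((L ×ˢ L).filter (fun π => k ≤ ii A (gq π))).card := by
  have h1 : ∀ π ∈ L ×ˢ L, ii A (gq π) ≤ Δ + ∑ k ∈ Finset.Ioc Δ A.card, if k ≤ ii A (gq π) then 1 else 0 := by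
    intro π _
    have h2 : ii A (gq π) ≤ A.card := Finset.card_le_card (Finset.filter_subset _ _)
    rw [← Finset.card_filter]
    have h3 : Finset.Ioc Δ (ii A (gq π)) ⊆ (Finset.Ioc Δ A.card).filter (fun k => k ≤ ii A (gq π)) := by
      intro k hk
      rw [Finset.mem_Ioc] at hk
      rw [Finset.mem_filter, Finset.mem_Ioc]
      exact ⟨⟨hk.1, hk.2.trans h2⟩, hk.2⟩
    have := Finset.card_le_card h3
    rw [Nat.card_Ioc] at this
    omega
  refine (Finset.sum_le_sum h1).trans (le_of_eq ?_)
  rw [Finset.sum_add_distrib, Finset.sum_const, Finset.card_product, Finset.sum_comm]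
  simp only [Finset.card_filter]
  rw [smul_eq_mul]; ring

lemma final_bound (A : Finset (ZMod p)) (L : Finset (ZMod p × ZMod p)) (hLne : L.Nonempty)
    (z : ℝ) (hz : 0 ≤ z) (hz8 : z ^ 8 = (A.card : ℝ) ^ 5 * affEnergy p L) :
    ((∑ π ∈ L ×ˢ L, ii A (gq π) : ℕ) : ℝ) ≤
      4 * (max 1 ((A.card : ℝ) ^ 2 / p)) * L.card ^ 2 + 100002 * (z ^ 2 * L.card) := by
  classical
  have hp0 : (0:ℝ) < p := by exact_mod_cast (Fact.out : p.Prime).pos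
  set n : ℝ := (A.card : ℝ) with hn
  set l : ℝ := (L.card : ℝ) with hl
  have hl0 : 0 < l := by rw [hl]; exact_mod_cast Finset.card_pos.2 hLne
  set M1 := max 1 (n ^ 2 / p) with hM1
  have hM11 : 1 ≤ M1 := le_max_left _ _
  have hM12 : n ^ 2 / p ≤ M1 := le_max_right _ _
  set x : ℝ := 2 * M1 + z ^ 2 / l - 1 with hx
  have hX : 0 ≤ z ^ 2 / l := by positivity
  set Δ : ℕ := ⌈x⌉₊ with hΔ
  have hx1 : 1 ≤ x := by linarith
  have hΔx : x ≤ Δ := Nat.le_ceil x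
  have hΔ2 : (Δ:ℝ) ≤ 2 * M1 + z ^ 2 / l := by
    have := Nat.ceil_lt_add_one (show 0 ≤ x by linarith)
    rw [← hΔ] at this; linarith
  have hΔ1 : 1 ≤ Δ := by
    have : (1:ℝ) ≤ Δ := hx1.trans hΔx
    exact_mod_cast this
  have hΔ0 : (0:ℝ) < Δ := by exact_mod_cast hΔ1
  have hlev : ∀ k ∈ Finset.Ioc Δ A.card,
      (((L ×ˢ L).filter (fun π => k ≤ ii A (gq π))).card : ℝ) ≤ 10 ^ 5 * z ^ 4 * ((k:ℝ) ^ 2)⁻¹ := by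
    intro k hk
    rw [Finset.mem_Ioc] at hk
    have hkΔ : (Δ:ℝ) + 1 ≤ k := by exact_mod_cast hk.1
    have hk0 : (0:ℝ) < k := by linarith
    have h1 := level A L k (by omega) (by
      have h2 : n ^ 2 ≤ M1 * p := (div_le_iff₀ hp0).1 hM12
      have h3 : 2 * M1 ≤ k := by linarith
      have h4 : 2 * n ^ 2 ≤ k * p := by nlinarith
      rw [hn] at h4
      exact_mod_cast h4)
    have h2 : ((((L ×ˢ L).filter (fun π => k ≤ ii A (gq π))).card : ℝ) * k ^ 2) ^ 2 ≤ (10 ^ 5 * z ^ 4) ^ 2 := by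
      have h3 : ((((L ×ˢ L).filter (fun π => k ≤ ii A (gq π))).card : ℝ) * k ^ 2) ^ 2 ≤
        10 ^ 10 * n ^ 5 * affEnergy p L := by rw [hn]; exact_mod_cast h1
      calc _ ≤ _ := h3
        _ = 10 ^ 10 * (n ^ 5 * affEnergy p L) := by ring
        _ = _ := by rw [← hz8]; ring
    have h3 := (sq_le_sq₀ (by positivity) (by positivity)).1 h2
    rw [← div_eq_mul_inv, le_div_iff₀ (by positivity)]
    exact h3
  have hsum : ∑ k ∈ Finset.Ioc Δ A.card, ((k:ℝ) ^ 2)⁻¹ ≤ (Δ:ℝ)⁻¹ := by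
    rcases le_or_gt Δ A.card with h | h
    · have := sum_Ioc_inv_sq_le_sub (α := ℝ) (show Δ ≠ 0 by omega) h
      have h0 : (0:ℝ) ≤ ((A.card : ℕ):ℝ)⁻¹ := by positivity
      linarith
    · rw [Finset.Ioc_eq_empty (by omega)]; simp
  have h5 : (∑ k ∈ Finset.Ioc Δ A.card, (((L ×ˢ L).filter (fun π => k ≤ ii A (gq π))).card : ℝ)) ≤
      10 ^ 5 * z ^ 4 * (Δ:ℝ)⁻¹ := by
    refine (Finset.sum_le_sum hlev).trans ?_
    rw [← Finset.mul_sum]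
    exact mul_le_mul_of_nonneg_left hsum (by positivity)
  have h6 : z ^ 4 * (Δ:ℝ)⁻¹ ≤ z ^ 2 * l := by
    rw [← div_eq_mul_inv, div_le_iff₀ hΔ0]
    have h7 : z ^ 2 / l ≤ Δ := by linarith
    have h8 : z ^ 2 ≤ Δ * l := (div_le_iff₀ hl0).1 h7
    nlinarith [sq_nonneg z]
  have h9 : ((∑ π ∈ L ×ˢ L, ii A (gq π) : ℕ) : ℝ) ≤ Δ * l ^ 2 +
      ∑ k ∈ Finset.Ioc Δ A.card, (((L ×ˢ L).filter (fun π => k ≤ ii A (gq π))).card : ℝ) := by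
    rw [hl]; exact_mod_cast layer A L Δ
  have h10 : (Δ:ℝ) * l ^ 2 ≤ 2 * M1 * l ^ 2 + z ^ 2 * l := by
    calc (Δ:ℝ) * l ^ 2 ≤ (2 * M1 + z ^ 2 / l) * l ^ 2 := by gcongr
      _ = _ := by field_simp
  have h11 : 0 ≤ M1 * l ^ 2 := by positivity
  have h12 : 0 ≤ z ^ 2 * l := by positivity
  nlinarith

end fin

end EI

theorem energy_incidence_Fp :
    ∃ C : ℝ, 0 < C ∧
      ∀ (p : ℕ), p.Prime →
        ∀ (A B : Finset (ZMod p)) (L : Finset (ZMod p × ZMod p)), (∀ l ∈ L, l.1 ≠ 0) →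
          (inc p A B L : ℝ) ≤
            C * max
              ((B.card : ℝ) ^ ((1 : ℝ) / 2) * (L.card : ℝ) *
                (max 1 ((A.card : ℝ) ^ 2 / (p : ℝ))) ^ ((1 : ℝ) / 2))
              ((B.card : ℝ) ^ ((1 : ℝ) / 2) * (A.card : ℝ) ^ ((5 : ℝ) / 8) *
                (affEnergy p L : ℝ) ^ ((1 : ℝ) / 8) * (L.card : ℝ) ^ ((1 : ℝ) / 2)) := by
  refine ⟨1000, by norm_num, ?_⟩
  intro p hp A B L hL
  haveI : Fact p.Prime := ⟨hp⟩
  have hsq : ∀ t : ℝ, 0 ≤ t → (t ^ ((1:ℝ)/2)) ^ 2 = t := by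
    intro t ht
    rw [← Real.rpow_natCast, ← Real.rpow_mul ht]; norm_num
  set z : ℝ := (A.card : ℝ) ^ ((5 : ℝ) / 8) * (affEnergy p L : ℝ) ^ ((1 : ℝ) / 8) with hz
  have hz0 : 0 ≤ z := by positivity
  have hz8 : z ^ 8 = (A.card : ℝ) ^ 5 * affEnergy p L := by
    rw [hz, mul_pow, ← Real.rpow_natCast, ← Real.rpow_natCast, ← Real.rpow_mul (by positivity),
      ← Real.rpow_mul (by positivity)]
    norm_num
  set M1 := max 1 ((A.card : ℝ) ^ 2 / (p : ℝ)) with hM1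
  have hM0 : 0 ≤ M1 := zero_le_one.trans (le_max_left _ _)
  set a1 := (B.card : ℝ) ^ ((1 : ℝ) / 2) * (L.card : ℝ) * M1 ^ ((1 : ℝ) / 2) with ha1
  set a2 := (B.card : ℝ) ^ ((1 : ℝ) / 2) * (A.card : ℝ) ^ ((5 : ℝ) / 8) *
                (affEnergy p L : ℝ) ^ ((1 : ℝ) / 8) * (L.card : ℝ) ^ ((1 : ℝ) / 2) with ha2
  have ha10 : 0 ≤ a1 := by positivity
  have ha20 : 0 ≤ a2 := by positivity
  have e1 : a1 ^ 2 = B.card * L.card ^ 2 * M1 := by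
    rw [ha1, mul_pow, mul_pow, hsq _ (by positivity), hsq _ hM0]
  have e2 : a2 ^ 2 = B.card * (z ^ 2 * L.card) := by
    have : a2 = (B.card : ℝ) ^ ((1 : ℝ) / 2) * z * (L.card : ℝ) ^ ((1 : ℝ) / 2) := by
      rw [ha2, hz]; ring
    rw [this, mul_pow, mul_pow, hsq _ (by positivity), hsq _ (by positivity)]; ring
  have hinc : (inc p A B L : ℝ) ^ 2 ≤ 4 * a1 ^ 2 + 100002 * a2 ^ 2 := by
    rcases L.eq_empty_or_nonempty with h | h
    · have h1 := EI.inc_sq A B L hL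
      rw [h] at h1
      simp at h1
      rw [h, h1]
      simp
      positivity
    · have h1 : (inc p A B L : ℝ) ^ 2 ≤ B.card * ((∑ π ∈ L ×ˢ L, EI.ii A (EI.gq π) : ℕ) : ℝ) := by
        exact_mod_cast EI.inc_sq A B L hL
      refine h1.trans ?_
      have h2 := mul_le_mul_of_nonneg_left (EI.final_bound A L h z hz0 hz8) (Nat.cast_nonneg (α := ℝ) B.card)
      rw [← hM1] at h2
      rw [e1, e2]
      linarith
  set m := max a1 a2 with hm
  have hm1 : a1 ≤ m := le_max_left _ _
  have hm2 : a2 ≤ m := le_max_right _ _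
  have h1 : a1 ^ 2 ≤ m ^ 2 := pow_le_pow_left₀ ha10 hm1 2
  have h2 : a2 ^ 2 ≤ m ^ 2 := pow_le_pow_left₀ ha20 hm2 2
  have hm0 : 0 ≤ m := ha10.trans hm1
  apply le_of_sq_le_sq _ (by positivity)
  nlinarith
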